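/- arXiv:1109.3588 — 8 statements merged into one kernel-verified Lean document; each statement's English description precedes it below -/
import Mathlib

section
/- Let T be a self-adjoint operator on a Hilbert space H and let a < b be real numbers such that [a,b] ∩ Spec(T) = {λ} with a < λ < b. Let 𝓛 ⊆ Dom(T) be a finite-dimensional subspace satisfying min_{0≠u∈𝓛} ⟨Tu,u⟩/‖u‖² < b and max_{0≠u∈𝓛} ⟨Tu,u⟩/‖u‖² > a. Define τ⁺ = max_{0≠u∈𝓛} ⟨(T−a)u,u⟩/‖(T−a)u‖² and τ⁻ = min_{0≠u∈𝓛} ⟨(T−b)u,u⟩/‖(T−b)u‖². Then τ⁺ > 0, τ⁻ < 0, and b + 1/τ⁻ ≤ λ ≤ a + 1/τ⁺. -/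
open Filter Topology
open scoped ComplexInnerProductSpace

/-- A (possibly unbounded, densely defined) linear operator from `E` to `F`,
encoded by its domain together with a total function that is linear on the domain. -/
structure PMap (E F : Type*) [NormedAddCommGroup E] [InnerProductSpace ℂ E]
    [NormedAddCommGroup F] [InnerProductSpace ℂ F] : Type _ where
  dom : Submodule ℂ E
  toFun : E → F
  map_add' : ∀ x ∈ dom, ∀ y ∈ dom, toFun (x + y) = toFun x + toFun y
  map_smul' : ∀ (c : ℂ), ∀ x ∈ dom, toFun (c • x) = c • toFun x

namespace PMap

variable {E F : Type*} [NormedAddCommGroup E] [InnerProductSpace ℂ E]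
  [NormedAddCommGroup F] [InnerProductSpace ℂ F]

/-- `T` is self-adjoint : it is densely defined and the adjoint relation
`⟪T x, y⟫ = ⟪x, z⟫` (for all `x` in the domain) holds iff `y` is in the domain
and `z = T y`. -/
def IsSelfAdjoint (T : PMap E E) : Prop :=
  Dense (T.dom : Set E) ∧
    ∀ y z : E, (∀ x ∈ T.dom, ⟪T.toFun x, y⟫ = ⟪x, z⟫) ↔ y ∈ T.dom ∧ z = T.toFun y

/-- The resolvent set : points `z` where `T - z` has an everywhere defined bounded inverse. -/
def resolventSet (T : PMap E E) : Set ℂ :=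
  {z | ∃ R : E →L[ℂ] E, (∀ x ∈ T.dom, R (T.toFun x - z • x) = x) ∧
      ∀ y : E, R y ∈ T.dom ∧ T.toFun (R y) - z • R y = y}

/-- The spectrum of `T`. -/
def spec (T : PMap E E) : Set ℂ := {z | z ∉ T.resolventSet}

/-- The real points of the spectrum of `T`. -/
def specR (T : PMap E E) : Set ℝ := {t : ℝ | (t : ℂ) ∈ T.spec}

/-- The (real) essential spectrum of `T`, via singular Weyl sequences. -/
def specEssR (T : PMap E E) : Set ℝ :=
  {t : ℝ | ∃ f : ℕ → E, (∀ n, f n ∈ T.dom) ∧ (∀ n, ‖f n‖ = 1) ∧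
      (∀ y : E, Tendsto (fun n => ⟪y, f n⟫) atTop (𝓝 0)) ∧
      Tendsto (fun n => ‖T.toFun (f n) - (t : ℂ) • f n‖) atTop (𝓝 0)}

/-- The eigenspace `ker (T - t)`. -/
def eigSp (T : PMap E E) (t : ℝ) : Submodule ℂ E where
  carrier := {x | x ∈ T.dom ∧ T.toFun x = (t : ℂ) • x}
  add_mem' := by
    rintro a b ⟨ha1, ha2⟩ ⟨hb1, hb2⟩
    exact ⟨T.dom.add_mem ha1 hb1, by rw [T.map_add' a ha1 b hb1, ha2, hb2, smul_add]⟩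
  zero_mem' := by
    refine ⟨T.dom.zero_mem, ?_⟩
    have h := T.map_smul' 0 0 T.dom.zero_mem
    simpa using h
  smul_mem' := by
    rintro c x ⟨hx1, hx2⟩
    refine ⟨T.dom.smul_mem c hx1, ?_⟩
    rw [T.map_smul' c x hx1, hx2]
    exact smul_comm c ((t : ℂ)) x

/-- The distance from `u` to the set `L` in the graph norm of `T`. -/
noncomputable def gdist (T : PMap E E) (u : E) (L : Set E) : ℝ :=
  sInf {r | ∃ v ∈ L, r = Real.sqrt (‖u - v‖ ^ 2 + ‖T.toFun u - T.toFun v‖ ^ 2)}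

end PMap

namespace PMap

variable {E : Type*} [NormedAddCommGroup E] [InnerProductSpace ℂ E]

/-- The Rayleigh quotient `⟨Tu,u⟩/‖u‖²`. -/
noncomputable def rayleigh (T : PMap E E) (u : E) : ℝ :=
  (⟪T.toFun u, u⟫).re / ‖u‖ ^ 2

/-- The inverse residual `⟨(T−s)u,u⟩/‖(T−s)u‖²`. -/
noncomputable def invRes (T : PMap E E) (s : ℝ) (u : E) : ℝ :=
  (⟪T.toFun u - (s : ℂ) • u, u⟫).re / ‖T.toFun u - (s : ℂ) • u‖ ^ 2

end PMap

theorem PMap.sa_symm {H : Type*} [NormedAddCommGroup H] [InnerProductSpace ℂ H]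
    (T : PMap H H) (hT : T.IsSelfAdjoint) (x y : H) (hx : x ∈ T.dom) (hy : y ∈ T.dom) :
    ⟪T.toFun x, y⟫ = ⟪x, T.toFun y⟫ :=
  ((hT.2 y (T.toFun y)).2 ⟨hy, rfl⟩) x hx

theorem PMap.resolvent_unit {H : Type*} [NormedAddCommGroup H] [InnerProductSpace ℂ H]
    (T : PMap H H) (s e m : ℝ) (he : e * e = 1) (hm : m ≠ 0) (R S : H →L[ℂ] H)
    (hR1 : ∀ x ∈ T.dom, R (T.toFun x - (s : ℂ) • x) = x)
    (hR2 : ∀ y : H, R y ∈ T.dom ∧ T.toFun (R y) - (s : ℂ) • R y = y)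
    (hS1 : ∀ x ∈ T.dom, S (T.toFun x - ((s + e * m⁻¹ : ℝ) : ℂ) • x) = x)
    (hS2 : ∀ y : H, S y ∈ T.dom ∧ T.toFun (S y) - ((s + e * m⁻¹ : ℝ) : ℂ) • S y = y) :
    IsUnit ((m : ℂ) • (1 : H →L[ℂ] H) - (e : ℂ) • R) := by
  have he' : (e : ℂ) * e = 1 := by exact_mod_cast he
  have hm' : (m : ℂ) ≠ 0 := by exact_mod_cast hm
  have h1 : ∀ y, S y = R y + ((e : ℂ) * (m : ℂ)⁻¹) • R (S y) := by
    intro y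
    have h := hR1 (S y) (hS2 y).1
    have h2 : T.toFun (S y) - (s : ℂ) • S y = y + ((e : ℂ) * (m : ℂ)⁻¹) • S y := by
      have := (hS2 y).2
      push_cast at this
      rw [add_smul] at this
      nth_rewrite 3 [← this]
      abel
    rw [h2, map_add, map_smul] at h
    exact h.symm
  have h2 : ∀ y, R y = S y - ((e : ℂ) * (m : ℂ)⁻¹) • S (R y) := by
    intro y
    have h := hS1 (R y) (hR2 y).1
    have h2 : T.toFun (R y) - ((s + e * m⁻¹ : ℝ) : ℂ) • R y
        = y - ((e : ℂ) * (m : ℂ)⁻¹) • R y := by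
      have := (hR2 y).2
      nth_rewrite 3 [← this]
      push_cast
      rw [add_smul]
      abel
    rw [h2, map_sub, map_smul] at h
    exact h.symm
  refine ⟨⟨_, (m : ℂ)⁻¹ • (1 : H →L[ℂ] H) + ((e : ℂ) * (m : ℂ)⁻¹ * (m : ℂ)⁻¹) • S,
    ?_, ?_⟩, rfl⟩
  · ext y
    have h := h1 y
    simp only [mul_apply_eq_comp, _root_.sub_apply,
      _root_.add_apply, _root_.smul_apply,
      one_apply_eq_self, map_add, map_smul]
    nth_rewrite 1 [h]
    match_scalars
    · field_simp
    · field_simp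
      ring
    · field_simp
      linear_combination 0 * he'
  · ext y
    have h := h2 y
    simp only [mul_apply_eq_comp, _root_.sub_apply,
      _root_.add_apply, _root_.smul_apply,
      one_apply_eq_self, map_sub, map_smul]
    nth_rewrite 1 [h]
    match_scalars
    · field_simp
    · field_simp
      ring
    · field_simp
      linear_combination 0 * he'

theorem PMap.key {H : Type*} [NormedAddCommGroup H] [InnerProductSpace ℂ H] [CompleteSpace H]
    (T : PMap H H) (hT : T.IsSelfAdjoint) (s e d : ℝ) (he : e * e = 1) (hd : 0 < d)
    (hs : (s : ℂ) ∈ T.resolventSet)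
    (hr : ∀ r : ℝ, 0 < r → r < d → ((s + e * r : ℝ) : ℂ) ∈ T.resolventSet)
    (u : H) (hu : u ∈ T.dom) :
    e * (⟪T.toFun u - (s : ℂ) • u, u⟫).re ≤ d⁻¹ * ‖T.toFun u - (s : ℂ) • u‖ ^ 2 := by
  obtain ⟨R, hR1, hR2⟩ := hs
  have hsa : ∀ x y, ⟪R x, y⟫ = ⟪x, R y⟫ := by
    intro x y
    have hx := hR2 x
    have hy := hR2 y
    have h := T.sa_symm hT _ _ hx.1 hy.1
    nth_rewrite 1 [← hy.2]
    nth_rewrite 2 [← hx.2]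
    rw [inner_sub_right, inner_sub_left, inner_smul_left, inner_smul_right, h]
    simp
  have hRsa : _root_.IsSelfAdjoint R :=
    ContinuousLinearMap.isSelfAdjoint_iff_isSymmetric.2 hsa
  set A : H →L[ℂ] H := ((d⁻¹ : ℝ) : ℂ) • (1 : H →L[ℂ] H) - (e : ℂ) • R with hA
  have hAsa : _root_.IsSelfAdjoint A := by
    rw [hA]
    refine _root_.IsSelfAdjoint.sub (_root_.IsSelfAdjoint.smul ?_ (IsSelfAdjoint.one _))
      (_root_.IsSelfAdjoint.smul ?_ hRsa)
    · simp [isSelfAdjoint_iff]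
    · simp [isSelfAdjoint_iff]
  have hpos : 0 ≤ A := by
    rw [StarOrderedRing.nonneg_iff_spectrum_nonneg (R := ℝ) A hAsa]
    intro x hx
    by_contra hneg
    push Not at hneg
    apply hx
    have hdi : 0 < d⁻¹ := inv_pos.2 hd
    have hm : 0 < d⁻¹ - x := by linarith
    obtain ⟨S, hS1, hS2⟩ := hr (d⁻¹ - x)⁻¹ (inv_pos.2 hm)
      (inv_lt_of_inv_lt₀ hd (by linarith))
    have := T.resolvent_unit s e (d⁻¹ - x) he hm.ne' R S hR1 hR2 hS1 hS2
    rw [spectrum.mem_resolventSet_iff, ← IsUnit.neg_iff]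
    convert this using 1
    rw [hA, Algebra.algebraMap_eq_smul_one]
    ext y
    simp [sub_smul]
    abel
  have hp := (ContinuousLinearMap.nonneg_iff_isPositive A).1 hpos
  have h := hp.re_inner_nonneg_left (T.toFun u - (s : ℂ) • u)
  have hRu := hR1 u hu
  set v := T.toFun u - (s : ℂ) • u
  have hAv : A v = ((d⁻¹ : ℝ) : ℂ) • v - (e : ℂ) • u := by
    rw [hA]; simp [hRu]
  rw [hAv, inner_sub_left, inner_smul_left, inner_smul_left, inner_self_eq_norm_sq_to_K] at h
  have h3 : (⟪u, v⟫).re = (⟪v, u⟫).re := by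
    rw [← inner_conj_symm v u, Complex.conj_re]
  rw [← h3]
  simp only [Complex.conj_ofReal, RCLike.re_eq_complex_re, Complex.sub_re,
    Complex.re_ofReal_mul] at h
  have h4 : (((‖v‖ : ℝ) : ℂ) ^ 2).re = ‖v‖ ^ 2 := by
    rw [← Complex.ofReal_pow, Complex.ofReal_re]
  have h5 : d⁻¹ * (((‖v‖ : ℝ) : ℂ) ^ 2).re - e * (⟪u, v⟫).re ≥ 0 := h
  rw [h4] at h5
  linarith

/-- Lemma 3.1 of the paper.  Let `T` be a self-adjoint operator, let
`[a,b] ∩ Spec T = {lam}` with `a < lam < b`, and let `L ⊆ Dom T` be a finite-dimensional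
subspace whose Rayleigh quotients dip below `b` and above `a`.  Then the inverse residuals
`τ⁺ = max ⟨(T−a)u,u⟩/‖(T−a)u‖²` and `τ⁻ = min ⟨(T−b)u,u⟩/‖(T−b)u‖²` over `L \ {0}`
satisfy `τ⁺ > 0`, `τ⁻ < 0` and `b + 1/τ⁻ ≤ lam ≤ a + 1/τ⁺`. -/
theorem statement0
    {H : Type*} [NormedAddCommGroup H] [InnerProductSpace ℂ H] [CompleteSpace H]
    (T : PMap H H) (hT : T.IsSelfAdjoint)
    (a b lam : ℝ) (hab : a < b) (halam : a < lam) (hlamb : lam < b)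
    (hspec : T.specR ∩ Set.Icc a b = {lam})
    (L : Submodule ℂ H) (hL : (L : Set H) ⊆ T.dom) [FiniteDimensional ℂ L]
    (hmin : ∃ u ∈ L, u ≠ 0 ∧ T.rayleigh u < b)
    (hmax : ∃ u ∈ L, u ≠ 0 ∧ a < T.rayleigh u)
    (τp τm : ℝ)
    (hτp : IsGreatest {r : ℝ | ∃ u ∈ L, u ≠ 0 ∧ r = T.invRes a u} τp)
    (hτm : IsLeast {r : ℝ | ∃ u ∈ L, u ≠ 0 ∧ r = T.invRes b u} τm) :
    0 < τp ∧ τm < 0 ∧ b + 1 / τm ≤ lam ∧ lam ≤ a + 1 / τp := by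
  have hres : ∀ t : ℝ, a ≤ t → t ≤ b → t ≠ lam → (t : ℂ) ∈ T.resolventSet := by
    intro t h1 h2 h3
    by_contra h4
    have : t ∈ T.specR ∩ Set.Icc a b := ⟨h4, h1, h2⟩
    rw [hspec] at this
    exact h3 this
  have hre : ∀ (s : ℝ) (u : H), (⟪T.toFun u - (s : ℂ) • u, u⟫).re
      = (⟪T.toFun u, u⟫).re - s * ‖u‖ ^ 2 := by
    intro s u
    rw [inner_sub_left, inner_smul_left, inner_self_eq_norm_sq_to_K, Complex.sub_re,
      Complex.conj_ofReal, Complex.re_ofReal_mul]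
    congr 2
    exact (congrArg Complex.re (Complex.ofReal_pow ‖u‖ 2)).symm.trans (Complex.ofReal_re _)
  have hne : ∀ (s : ℝ) (u : H), (⟪T.toFun u - (s : ℂ) • u, u⟫).re ≠ 0 →
      0 < ‖T.toFun u - (s : ℂ) • u‖ ^ 2 := by
    intro s u h
    have : T.toFun u - (s : ℂ) • u ≠ 0 := by
      intro h0
      rw [h0] at h
      simp at h
    positivity
  have hp : 0 < τp := by
    obtain ⟨u, huL, hu0, hu⟩ := hmax
    have hn : 0 < ‖u‖ ^ 2 := by positivity
    rw [PMap.rayleigh, lt_div_iff₀ hn] at hu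
    have h1 : 0 < (⟪T.toFun u - (a : ℂ) • u, u⟫).re := by rw [hre]; linarith
    exact lt_of_lt_of_le (div_pos h1 (hne a u h1.ne')) (hτp.2 ⟨u, huL, hu0, rfl⟩)
  have hm : τm < 0 := by
    obtain ⟨u, huL, hu0, hu⟩ := hmin
    have hn : 0 < ‖u‖ ^ 2 := by positivity
    rw [PMap.rayleigh, div_lt_iff₀ hn] at hu
    have h1 : (⟪T.toFun u - (b : ℂ) • u, u⟫).re < 0 := by rw [hre]; linarith
    exact lt_of_le_of_lt (hτm.2 ⟨u, huL, hu0, rfl⟩) (div_neg_of_neg_of_pos h1 (hne b u h1.ne))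
  refine ⟨hp, hm, ?_, ?_⟩
  · obtain ⟨u, huL, hu0, hu⟩ := hτm.1
    have hd : 0 < b - lam := by linarith
    have hk := T.key hT b (-1) (b - lam) (by norm_num) hd (hres b hab.le le_rfl hlamb.ne')
      (fun r h1 h2 => hres _ (by linarith) (by linarith)
        (by intro h; linarith)) u (hL huL)
    have hle : -τm ≤ (b - lam)⁻¹ := by
      rw [hu, PMap.invRes, ← neg_div]
      refine div_le_of_le_mul₀ (by positivity) (by positivity) ?_
      linarith
    have h2 : b - lam ≤ (-τm)⁻¹ := (le_inv_comm₀ (by linarith) hd).1 hle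
    rw [inv_neg] at h2
    rw [one_div]
    linarith
  · obtain ⟨u, huL, hu0, hu⟩ := hτp.1
    have hd : 0 < lam - a := by linarith
    have hk := T.key hT a 1 (lam - a) (by norm_num) hd (hres a le_rfl hab.le halam.ne)
      (fun r h1 h2 => hres _ (by linarith) (by linarith)
        (by intro h; linarith)) u (hL huL)
    have hle : τp ≤ (lam - a)⁻¹ := by
      rw [hu, PMap.invRes]
      refine div_le_of_le_mul₀ (by positivity) (by positivity) ?_
      linarith
    have h2 : lam - a ≤ τp⁻¹ := (le_inv_comm₀ hp hd).1 hle
    rw [one_div]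
    linarith
end

section
/- Let T be a self-adjoint operator on a Hilbert space H, let λ be an isolated eigenvalue of finite multiplicity of T, and let a < λ < b be such that [a,b] ∩ Spec(T) = {λ}. Let 𝔅 be an orthonormal basis of ker(T−λ) and let (𝓛_n) ∈ Λ(T) be a sequence of finite-dimensional subspaces with dist_T[𝔅,𝓛_n] = ε_n → 0. Define τ_n⁺ = max_{0≠u∈𝓛_n} ⟨(T−a)u,u⟩/‖(T−a)u‖² and τ_n⁻ = min_{0≠u∈𝓛_n} ⟨(T−b)u,u⟩/‖(T−b)u‖². Then for all sufficiently large n: b + 1/τ_n⁻ ≤ λ ≤ a + 1/τ_n⁺, and (a + 1/τ_n⁺) − (b + 1/τ_n⁻) = O(ε_n²). -/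
open Filter Topology
open scoped ComplexInnerProductSpace

namespace PMap

variable {H : Type*} [NormedAddCommGroup H] [InnerProductSpace ℂ H]

lemma symm_of_sa {T : PMap H H} (hT : T.IsSelfAdjoint) {x y : H} (hx : x ∈ T.dom)
    (hy : y ∈ T.dom) : ⟪T.toFun x, y⟫ = ⟪x, T.toFun y⟫ :=
  (hT.2 y (T.toFun y)).2 ⟨hy, rfl⟩ x hx

lemma key_pos [CompleteSpace H] {T : PMap H H} (hT : T.IsSelfAdjoint) (s d : ℝ)
    (hres : ∀ t : ℝ, 0 ≤ t → t < 1 → ((s + d * t : ℝ) : ℂ) ∈ T.resolventSet)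
    {u : H} (hu : u ∈ T.dom) :
    d * (⟪T.toFun u - (s : ℂ) • u, u⟫).re ≤ ‖T.toFun u - (s : ℂ) • u‖ ^ 2 := by
  have h0 := hres 0 le_rfl one_pos
  simp only [mul_zero, add_zero] at h0
  obtain ⟨R, hR1, hR2⟩ := h0
  set A : H →L[ℂ] H := (d : ℂ) • R with hA
  have hRsa : _root_.IsSelfAdjoint R := by
    rw [ContinuousLinearMap.isSelfAdjoint_iff_isSymmetric]
    intro x y
    have hx := hR2 x
    have hy := hR2 y
    change ⟪R x, y⟫ = ⟪x, R y⟫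
    conv_lhs => rw [← hy.2]
    conv_rhs => rw [← hx.2]
    rw [inner_sub_left, inner_sub_right, symm_of_sa hT hx.1 hy.1, inner_smul_left,
      inner_smul_right, Complex.conj_ofReal]
  have hAsa : _root_.IsSelfAdjoint A := by
    rw [hA]
    refine _root_.IsSelfAdjoint.smul ?_ hRsa
    simp [isSelfAdjoint_iff]
  have hle : A ≤ algebraMap ℝ (H →L[ℂ] H) 1 := by
    rw [le_algebraMap_iff_spectrum_le hAsa]
    intro x hx
    by_contra! hx1
    apply hx
    have hx0 : (0:ℝ) < x := by linarith
    obtain ⟨Q, hQ1, hQ2⟩ := hres x⁻¹ (by positivity) (inv_lt_one_of_one_lt₀ hx1)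
    set c : ℂ := ((d * x⁻¹ : ℝ) : ℂ) with hc
    have hcx : (x : ℂ) * c = d := by
      rw [hc]; push_cast
      have : (x : ℂ) ≠ 0 := by exact_mod_cast hx0.ne'
      field_simp
    have hxx : (x : ℂ) * (x : ℂ)⁻¹ = 1 := by
      have : (x : ℂ) ≠ 0 := by exact_mod_cast hx0.ne'
      field_simp
    have hzc : ((s + d * x⁻¹ : ℝ) : ℂ) = (s : ℂ) + c := by rw [hc]; push_cast; ring
    rw [hzc] at hQ1 hQ2
    -- resolvent identities
    have r1 : ∀ y, Q y - R y = c • R (Q y) := by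
      intro y
      have h1 := hR1 (Q y) (hQ2 y).1
      have h2 : T.toFun (Q y) - (s : ℂ) • Q y = y + c • Q y := by
        have := (hQ2 y).2
        rw [add_smul, sub_eq_iff_eq_add] at this
        rw [this]
        abel
      rw [h2, map_add, map_smul] at h1
      rw [sub_eq_iff_eq_add, add_comm]; exact h1.symm
    have r2 : ∀ y, Q y - R y = c • Q (R y) := by
      intro y
      have h1 := hQ1 (R y) (hR2 y).1
      have h2 : T.toFun (R y) - ((s : ℂ) + c) • R y = y - c • R y := by
        have := (hR2 y).2
        rw [sub_eq_iff_eq_add] at this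
        rw [add_smul, this]
        abel
      rw [h2, map_sub, map_smul] at h1
      rw [sub_eq_iff_eq_add, ← sub_eq_iff_eq_add']; exact h1
    have hAalg : ∀ y, (algebraMap ℝ (H →L[ℂ] H) x - A) y = (x : ℂ) • (y - c • R y) := by
      intro y
      rw [smul_sub, smul_smul, hcx, hA, Algebra.algebraMap_eq_smul_one]
      simp
    let B : H →L[ℂ] H := (x : ℂ)⁻¹ • (1 + c • Q)
    have hB : ∀ y, B y = (x : ℂ)⁻¹ • (y + c • Q y) := fun y => by simp [B]
    refine ⟨⟨algebraMap ℝ (H →L[ℂ] H) x - A, B, ?_, ?_⟩, rfl⟩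
    · ext y
      rw [mul_apply_eq_comp, hAalg, hB, map_smul, map_add, map_smul, ← r1 y,
        smul_comm c, ← smul_sub, smul_smul, hxx]
      simp
    · ext y
      rw [mul_apply_eq_comp, hB, hAalg, map_smul, map_sub, map_smul, ← r2 y,
        smul_comm c, ← smul_add, smul_smul, mul_comm, hxx]
      simp
  rw [map_one, ContinuousLinearMap.le_def] at hle
  set w := T.toFun u - (s : ℂ) • u with hw
  have h := hle.re_inner_nonneg_right w
  have hRw : R w = u := hR1 u hu
  have h2 : ((1 : H →L[ℂ] H) - A) w = w - (d : ℂ) • u := by simp [hA, hRw]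
  rw [h2, inner_sub_right, inner_smul_right, map_sub, inner_self_eq_norm_sq] at h
  have h3 : RCLike.re ((d : ℂ) * ⟪w, u⟫) = d * (⟪w, u⟫).re := by simp
  rw [h3] at h
  linarith

lemma est {T : PMap H H} (hT : T.IsSelfAdjoint) (s lam : ℝ) {φ v : H}
    (hφ : φ ∈ T.eigSp lam) (hφ1 : ‖φ‖ = 1) (hv : v ∈ T.dom) {δ : ℝ}
    (h1 : ‖φ - v‖ ≤ δ) (h2 : ‖T.toFun φ - T.toFun v‖ ≤ δ) (hδ1 : δ ≤ 1) :
    ‖T.toFun v - (s : ℂ) • v‖ ^ 2 - (lam - s) * (⟪T.toFun v - (s : ℂ) • v, v⟫).re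
        ≤ (1 + |s|) * (1 + |lam|) * δ ^ 2 ∧
      (lam - s) ^ 2 - |lam - s| * (|lam - s| + 2 * (1 + |s|)) * δ ≤
        (lam - s) * (⟪T.toFun v - (s : ℂ) • v, v⟫).re := by
  obtain ⟨hφd, hφe⟩ := hφ
  have hδ0 : 0 ≤ δ := (norm_nonneg _).trans h1
  set d : ℝ := lam - s with hd
  set w := T.toFun v - (s : ℂ) • v with hw
  set e := v - φ with he
  set q := T.toFun v - T.toFun φ with hq
  have he1 : ‖e‖ ≤ δ := by rw [he, norm_sub_rev]; exact h1
  have hq1 : ‖q‖ ≤ δ := by rw [hq, norm_sub_rev]; exact h2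
  set f := q - (s : ℂ) • e with hf
  set g := q - (lam : ℂ) • e with hg
  have hnf : ∀ t : ℝ, ‖q - (t : ℂ) • e‖ ≤ (1 + |t|) * δ := by
    intro t
    calc ‖q - (t : ℂ) • e‖ ≤ ‖q‖ + ‖(t : ℂ) • e‖ := norm_sub_le _ _
      _ = ‖q‖ + |t| * ‖e‖ := by rw [norm_smul, Complex.norm_real, Real.norm_eq_abs]
      _ ≤ δ + |t| * δ := by gcongr
      _ = _ := by ring
  have hfn := hnf s
  have hgn := hnf lam
  rw [← hf] at hfn
  rw [← hg] at hgn
  have hwf : w = (d : ℂ) • φ + f := by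
    rw [hw, hf, hq, he, hφe, hd]; push_cast; module
  have hwg : w - (d : ℂ) • v = g := by
    rw [hw, hg, hq, he, hφe, hd]; push_cast; module
  have hve : v = φ + e := by rw [he]; abel
  have horth : ⟪φ, g⟫ = 0 := by
    have hs := symm_of_sa hT hφd hv
    rw [hφe, inner_smul_left, Complex.conj_ofReal] at hs
    rw [← hwg, hw, hd]
    have : T.toFun v - (s : ℂ) • v - ((lam - s : ℝ) : ℂ) • v = T.toFun v - (lam : ℂ) • v := by
      push_cast; module
    rw [this, inner_sub_right, inner_smul_right, ← hs, sub_self]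
  constructor
  · have e1 : ‖w‖ ^ 2 - d * (⟪w, v⟫).re = (⟪f, g⟫).re := by
      have h3 : ⟪w, g⟫ = ⟪f, g⟫ := by
        rw [hwf, inner_add_left, inner_smul_left, horth, mul_zero, zero_add]
      rw [← h3, ← hwg, inner_sub_right, inner_smul_right, Complex.sub_re, Complex.re_ofReal_mul]
      congr 1
      exact (inner_self_eq_norm_sq (𝕜 := ℂ) w).symm
    rw [e1]
    calc (⟪f, g⟫).re ≤ ‖⟪f, g⟫‖ := Complex.re_le_norm _
      _ ≤ ‖f‖ * ‖g‖ := norm_inner_le_norm _ _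
      _ ≤ ((1 + |s|) * δ) * ((1 + |lam|) * δ) := by gcongr
      _ = _ := by ring
  · have e2 : (⟪w, v⟫).re = d + (d * (⟪φ, e⟫).re + (⟪f, φ⟫).re + (⟪f, e⟫).re) := by
      have h4 : (⟪φ, φ⟫).re = 1 := by
        have := inner_self_eq_norm_sq (𝕜 := ℂ) φ
        rw [hφ1] at this
        simpa using this
      rw [hwf, hve, inner_add_left, inner_add_right, inner_add_right, inner_smul_left,
        inner_smul_left, Complex.conj_ofReal]
      simp only [Complex.add_re, Complex.re_ofReal_mul, h4]
      ring
    have b : ∀ x y : H, |(⟪x, y⟫).re| ≤ ‖x‖ * ‖y‖ := fun x y =>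
      (Complex.abs_re_le_norm _).trans (norm_inner_le_norm _ _)
    have hM : 0 ≤ 1 + |s| := by positivity
    have b1 : |d * (⟪φ, e⟫).re| ≤ |d| * δ := by
      rw [abs_mul]
      have := b φ e
      rw [hφ1, one_mul] at this
      gcongr
      exact this.trans he1
    have b2 : |(⟪f, φ⟫).re| ≤ (1 + |s|) * δ := by
      have := b f φ
      rw [hφ1, mul_one] at this
      exact this.trans hfn
    have b3 : |(⟪f, e⟫).re| ≤ (1 + |s|) * δ := by
      refine (b f e).trans ?_
      calc ‖f‖ * ‖e‖ ≤ ((1 + |s|) * δ) * 1 := by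
            gcongr
            exact he1.trans hδ1
        _ = _ := mul_one _
    set X := d * (⟪φ, e⟫).re + (⟪f, φ⟫).re + (⟪f, e⟫).re with hX
    have bX : |X| ≤ (|d| + 2 * (1 + |s|)) * δ := by
      have := abs_add_three (d * (⟪φ, e⟫).re) (⟪f, φ⟫).re (⟪f, e⟫).re
      rw [← hX] at this
      linarith
    have bdX : |d * X| ≤ |d| * ((|d| + 2 * (1 + |s|)) * δ) := by
      rw [abs_mul]; gcongr
    have := neg_abs_le (d * X)
    rw [e2]
    nlinarith

lemma exists_near {T : PMap H H} {u : H} {L : Submodule ℂ H} {δ : ℝ}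
    (h : T.gdist u L < δ) :
    ∃ v ∈ L, ‖u - v‖ ≤ δ ∧ ‖T.toFun u - T.toFun v‖ ≤ δ := by
  unfold gdist at h
  obtain ⟨r, ⟨v, hv, rfl⟩, hr⟩ := exists_lt_of_csInf_lt (by exact ⟨_, 0, L.zero_mem, rfl⟩) h
  refine ⟨v, hv, ?_, ?_⟩
  · refine le_trans (Real.le_sqrt_of_sq_le ?_) hr.le
    nlinarith [sq_nonneg ‖T.toFun u - T.toFun v‖]
  · refine le_trans (Real.le_sqrt_of_sq_le ?_) hr.le
    nlinarith [sq_nonneg ‖u - v‖]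

lemma core [CompleteSpace H] {T : PMap H H} (hT : T.IsSelfAdjoint) (s lam : ℝ) (hne : lam - s ≠ 0)
    (hres : ∀ t : ℝ, 0 ≤ t → t < 1 → ((s + (lam - s) * t : ℝ) : ℂ) ∈ T.resolventSet)
    {φ : H} (hφ : φ ∈ T.eigSp lam) (hφ1 : ‖φ‖ = 1)
    (L : ℕ → Submodule ℂ H) (hLdom : ∀ n, (L n : Set H) ⊆ T.dom)
    (ε : ℕ → ℝ) (hε : ∀ n, T.gdist φ (L n) ≤ ε n) (hε0 : Tendsto ε atTop (𝓝 0))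
    (τ : ℕ → ℝ) (hmem : ∀ n, ∃ u ∈ L n, u ≠ 0 ∧ τ n = T.invRes s u)
    (hub : ∀ n, ∀ u ∈ L n, u ≠ 0 → (lam - s) * T.invRes s u ≤ (lam - s) * τ n) :
    ∃ (N : ℕ) (C : ℝ), ∀ n ≥ N, 1 ≤ 1 / ((lam - s) * τ n) ∧
      1 / ((lam - s) * τ n) ≤ 1 + C * ε n ^ 2 := by
  set d := lam - s with hd
  set P := |d| + 2 * (1 + |s|) with hP
  have hP0 : 0 < P := by positivity
  have hd0 : 0 < |d| := abs_pos.2 hne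
  set K := (1 + |s|) * (1 + |lam|) with hK
  have hK0 : 0 < K := by positivity
  set δ0 := min 1 (|d| / (2 * P)) with hδ0
  have hδ0pos : 0 < δ0 := by positivity
  obtain ⟨N, hN⟩ := eventually_atTop.1 (hε0.eventually_lt_const hδ0pos)
  refine ⟨N, 2 * K / d ^ 2, fun n hn => ?_⟩
  have hd2 : 0 < d ^ 2 := by positivity
  have hεn : 0 ≤ ε n := by
    refine le_trans ?_ (hε n)
    apply Real.sInf_nonneg
    rintro r ⟨v, -, rfl⟩
    positivity
  have main : ∀ δ, ε n < δ → δ < δ0 → 0 < d * τ n ∧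
      1 / (d * τ n) ≤ 1 + 2 * K / d ^ 2 * δ ^ 2 := by
    intro δ h1 h2
    obtain ⟨v, hvL, hv1, hv2⟩ := exists_near ((hε n).trans_lt h1)
    have hδ1 : δ ≤ 1 := h2.le.trans (min_le_left _ _)
    have hδP : δ ≤ |d| / (2 * P) := h2.le.trans (min_le_right _ _)
    obtain ⟨E1, E2⟩ := est hT s lam hφ hφ1 (hLdom n hvL) hv1 hv2 hδ1
    rw [← hd, ← hP] at E2
    rw [← hd, ← hK] at E1
    have hPδ : |d| * P * δ ≤ d ^ 2 / 2 := by
      calc |d| * P * δ ≤ |d| * P * (|d| / (2 * P)) := by gcongr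
        _ = |d| ^ 2 / 2 := by field_simp
        _ = _ := by rw [sq_abs]
    set w := T.toFun v - (s : ℂ) • v with hw
    set Y := d * (⟪w, v⟫).re with hY
    have hY2 : d ^ 2 / 2 ≤ Y := by linarith
    have hY0 : 0 < Y := by linarith
    have hv0 : v ≠ 0 := by
      rintro rfl
      simp [hY] at hY0
    have hw0 : 0 < ‖w‖ := by
      rw [norm_pos_iff]
      intro hw0
      simp [hY, hw0] at hY0
    have hτ := hub n v hvL hv0
    have hinv : d * T.invRes s v = Y / ‖w‖ ^ 2 := by
      unfold invRes; rw [← hw, hY]; ring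
    rw [hinv] at hτ
    have hq : 0 < Y / ‖w‖ ^ 2 := by positivity
    refine ⟨hq.trans_le hτ, ?_⟩
    calc 1 / (d * τ n) ≤ 1 / (Y / ‖w‖ ^ 2) := one_div_le_one_div_of_le hq hτ
      _ = ‖w‖ ^ 2 / Y := by rw [one_div_div]
      _ ≤ (Y + K * δ ^ 2) / Y := by gcongr; linarith
      _ = 1 + K * δ ^ 2 / Y := by field_simp
      _ ≤ 1 + K * δ ^ 2 / (d ^ 2 / 2) := by gcongr
      _ = _ := by field_simp
  have hev : ∀ᶠ δ in 𝓝[>] (ε n), ε n < δ ∧ δ < δ0 := Ioo_mem_nhdsGT (hN n hn)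
  obtain ⟨δ, hδ⟩ := hev.exists
  have hpos := (main δ hδ.1 hδ.2).1
  constructor
  · rw [le_div_iff₀ hpos, one_mul]
    obtain ⟨u, huL, hu0, hu⟩ := hmem n
    have := key_pos hT s d hres (hLdom n huL)
    rw [hu]
    unfold invRes
    rw [← mul_div_assoc]
    exact div_le_one_of_le₀ this (by positivity)
  · have ht : Tendsto (fun δ : ℝ => 1 + 2 * K / d ^ 2 * δ ^ 2) (𝓝[>] (ε n))
        (𝓝 (1 + 2 * K / d ^ 2 * (ε n) ^ 2)) := by
      apply Tendsto.mono_left _ nhdsWithin_le_nhds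
      apply Continuous.tendsto
      fun_prop
    refine ge_of_tendsto ht ?_
    filter_upwards [hev] with δ hδ
    exact (main δ hδ.1 hδ.2).2

end PMap

/-- Lemma 3.2 of the paper, convergence of the Zimmermann–Mertins
enclosures.  Let `lam` be an isolated eigenvalue of finite multiplicity of the
self-adjoint operator `T`, with `[a,b] ∩ Spec T = {lam}`, `a < lam < b`.  Let `𝔅 = φ`
be an orthonormal basis of `ker (T − lam)` and let `(L n)` be a sequence of
finite-dimensional trial subspaces of `Dom T`, dense in the graph norm (`Λ(T)`), with
`dist_T[𝔅, L n] = ε n → 0`.  Then eventually the Zimmermann–Mertins bounds hold and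
the length of the enclosure is `O(ε n ^ 2)`. -/
theorem statement1
    {H : Type*} [NormedAddCommGroup H] [InnerProductSpace ℂ H] [CompleteSpace H]
    (T : PMap H H) (hT : T.IsSelfAdjoint)
    (a b lam : ℝ) (halam : a < lam) (hlamb : lam < b)
    (hspec : T.specR ∩ Set.Icc a b = {lam})
    -- `lam` is an eigenvalue (point of the discrete spectrum) of finite multiplicity `k`
    (k : ℕ) (hk : 0 < k)
    (φ : Fin k → H) (hON : Orthonormal ℂ φ)
    (hφmem : ∀ j, φ j ∈ T.eigSp lam)
    (hφbasis : T.eigSp lam = Submodule.span ℂ (Set.range φ))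
    -- the trial subspaces: finite-dimensional, contained in `Dom T`, and `(L n) ∈ Λ(T)`
    (L : ℕ → Submodule ℂ H) (hLdom : ∀ n, (L n : Set H) ⊆ T.dom)
    (hLfin : ∀ n, FiniteDimensional ℂ (L n))
    (hΛ : ∀ u ∈ T.dom, Tendsto (fun n => T.gdist u (L n)) atTop (𝓝 0))
    -- `ε n = dist_T[𝔅, L n] → 0`
    (ε : ℕ → ℝ) (hε : ∀ n, ε n = ⨆ j : Fin k, T.gdist (φ j) (L n))
    (hε0 : Tendsto ε atTop (𝓝 0))
    -- the inverse residuals over `L n`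
    (τp τm : ℕ → ℝ)
    (hτp : ∀ n, IsGreatest {r : ℝ | ∃ u ∈ L n, u ≠ 0 ∧ r = T.invRes a u} (τp n))
    (hτm : ∀ n, IsLeast {r : ℝ | ∃ u ∈ L n, u ≠ 0 ∧ r = T.invRes b u} (τm n)) :
    ∃ (N : ℕ) (C : ℝ), ∀ n ≥ N,
      b + 1 / τm n ≤ lam ∧ lam ≤ a + 1 / τp n ∧
      (a + 1 / τp n) - (b + 1 / τm n) ≤ C * ε n ^ 2 := by
  have hres : ∀ t ∈ Set.Icc a b, t ≠ lam → (t : ℂ) ∈ T.resolventSet := by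
    intro t ht hne
    by_contra hc
    have : t ∈ T.specR ∩ Set.Icc a b := ⟨hc, ht⟩
    rw [hspec] at this
    exact hne this
  let j0 : Fin k := ⟨0, hk⟩
  have hε' : ∀ n, T.gdist (φ j0) (L n) ≤ ε n := by
    intro n
    rw [hε n]
    exact le_ciSup (f := fun j => T.gdist (φ j) (L n)) (Set.finite_range _).bddAbove j0
  have hda : 0 < lam - a := by linarith
  have hdb : lam - b < 0 := by linarith
  obtain ⟨N1, C1, h1⟩ := PMap.core hT a lam hda.ne'
    (fun t ht0 ht1 => hres _ ⟨by nlinarith, by nlinarith⟩ (by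
      intro h
      have : (lam - a) * (1 - t) = 0 := by linarith
      have : 0 < (lam - a) * (1 - t) := mul_pos hda (by linarith)
      linarith)) (hφmem j0) (hON.1 j0) L hLdom ε hε' hε0 τp
    (fun n => (hτp n).1)
    (fun n u hu hu0 => mul_le_mul_of_nonneg_left ((hτp n).2 ⟨u, hu, hu0, rfl⟩) hda.le)
  obtain ⟨N2, C2, h2⟩ := PMap.core hT b lam hdb.ne
    (fun t ht0 ht1 => hres _ ⟨by nlinarith, by nlinarith⟩ (by
      intro h
      have : (lam - b) * (1 - t) = 0 := by linarith
      have : (lam - b) * (1 - t) < 0 := mul_neg_of_neg_of_pos hdb (by linarith)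
      linarith)) (hφmem j0) (hON.1 j0) L hLdom ε hε' hε0 τm
    (fun n => (hτm n).1)
    (fun n u hu hu0 => mul_le_mul_of_nonpos_left ((hτm n).2 ⟨u, hu, hu0, rfl⟩) hdb.le)
  refine ⟨max N1 N2, (lam - a) * C1 - (lam - b) * C2, fun n hn => ?_⟩
  obtain ⟨p1, p2⟩ := h1 n ((le_max_left _ _).trans hn)
  obtain ⟨m1, m2⟩ := h2 n ((le_max_right _ _).trans hn)
  have ep : 1 / τp n = (lam - a) * (1 / ((lam - a) * τp n)) := by
    have := hda.ne'
    field_simp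
  have em : 1 / τm n = (lam - b) * (1 / ((lam - b) * τm n)) := by
    have := hdb.ne
    field_simp
  rw [ep, em]
  have q1 := mul_le_mul_of_nonneg_left p1 hda.le
  have q2 := mul_le_mul_of_nonneg_left p2 hda.le
  have q3 := mul_le_mul_of_nonpos_left m1 hdb.le
  have q4 := mul_le_mul_of_nonpos_left m2 hdb.le
  refine ⟨by linarith, by linarith, by linarith⟩
end

section
/- Let T be a self-adjoint operator on a Hilbert space H and let b be a real number with b ∉ Spec(T). If (𝓛_n) is a sequence of subspaces of Dom(T) belonging to Λ(T), then the image subspaces 𝓛̂_n = (T−b)𝓛_n belong to Λ, i.e., dist[v, (T−b)𝓛_n] → 0 for every v ∈ H. -/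
open Filter Topology
open scoped ComplexInnerProductSpace

/-- from the proof of Lemma 3.2.  If `b ∉ Spec T` and `(L n) ∈ Λ(T)`
(graph-norm density of the trial subspaces in `Dom T`), then the image subspaces
`L̂ n = (T − b) (L n)` belong to `Λ`, i.e. `dist[v, (T − b)(L n)] → 0` for every `v ∈ H`. -/
theorem statement2
    {H : Type*} [NormedAddCommGroup H] [InnerProductSpace ℂ H] [CompleteSpace H]
    (T : PMap H H) (hT : T.IsSelfAdjoint)
    (b : ℝ) (hb : b ∉ T.specR)
    (L : ℕ → Submodule ℂ H) (hLdom : ∀ n, (L n : Set H) ⊆ T.dom)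
    (hΛ : ∀ u ∈ T.dom, Tendsto (fun n => T.gdist u (L n)) atTop (𝓝 0)) :
    ∀ v : H,
      Tendsto (fun n => Metric.infDist v {y : H | ∃ u ∈ L n, y = T.toFun u - (b : ℂ) • u})
        atTop (𝓝 0) := by
  intro v
  have hb' : (b : ℂ) ∈ T.resolventSet := by
    by_contra h
    exact hb h
  obtain ⟨R, -, hR⟩ := hb'
  obtain ⟨hdom, heq⟩ := hR v
  have hC : 0 < 1 + |b| := by positivity
  have key : ∀ n, Metric.infDist v {y : H | ∃ u ∈ L n, y = T.toFun u - (b : ℂ) • u}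
      ≤ (1 + |b|) * T.gdist (R v) (L n) := by
    intro n
    rw [← div_le_iff₀' hC]
    unfold PMap.gdist
    apply le_csInf
    · exact ⟨_, 0, (L n).zero_mem, rfl⟩
    · rintro r ⟨w, hw, rfl⟩
      rw [div_le_iff₀' hC]
      have hmem : T.toFun w - (b : ℂ) • w ∈
          {y : H | ∃ u ∈ L n, y = T.toFun u - (b : ℂ) • u} := ⟨w, hw, rfl⟩
      refine (Metric.infDist_le_dist_of_mem hmem).trans ?_
      have h1 : v - (T.toFun w - (b : ℂ) • w)
          = (T.toFun (R v) - T.toFun w) - (b : ℂ) • (R v - w) := by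
        nth_rewrite 1 [← heq]
        rw [smul_sub]
        abel
      rw [dist_eq_norm, h1]
      have h2 : ‖T.toFun (R v) - T.toFun w‖
          ≤ Real.sqrt (‖R v - w‖ ^ 2 + ‖T.toFun (R v) - T.toFun w‖ ^ 2) :=
        Real.le_sqrt_of_sq_le (by nlinarith [sq_nonneg ‖R v - w‖])
      have h3 : ‖R v - w‖
          ≤ Real.sqrt (‖R v - w‖ ^ 2 + ‖T.toFun (R v) - T.toFun w‖ ^ 2) :=
        Real.le_sqrt_of_sq_le (by nlinarith [sq_nonneg ‖T.toFun (R v) - T.toFun w‖])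
      have h4 : ‖(b : ℂ) • (R v - w)‖ = |b| * ‖R v - w‖ := by
        rw [norm_smul, Complex.norm_real, Real.norm_eq_abs]
      have h5 := norm_sub_le (T.toFun (R v) - T.toFun w) ((b : ℂ) • (R v - w))
      have h6 := mul_le_mul_of_nonneg_left h3 (abs_nonneg b)
      rw [h4] at h5
      linarith
  have hlim := (hΛ (R v) hdom).const_mul (1 + |b|)
  rw [mul_zero] at hlim
  exact squeeze_zero (fun n => Metric.infDist_nonneg) key hlim
end

section
/- Let T be a self-adjoint operator on a Hilbert space H, let λ be an eigenvalue of T with k = dim ker(T−λ) < ∞, and let {φ₁,…,φ_k} be an orthonormal basis of ker(T−λ). Let b > λ be real, let ε > 0, and suppose u_1,…,u_k ∈ Dom(T) satisfy ‖(T−b)(φ_j − u_j)‖ ≤ (1+|b|)ε for each 1 ≤ j ≤ k. Then for every unit vector φ ∈ ker(T−λ), ‖φ − Σ_{j=1}^{k} (⟨φ_j,φ⟩/(λ−b)) (T−b)u_j‖ ≤ k(1+|b|)ε/(b−λ). In particular, the (non-symmetric) subspace gap δ(ker(T−λ), (T−b)·span{u_1,…,u_k}) is at most k(1+|b|)ε/(b−λ).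 -/
open Filter Topology
open scoped ComplexInnerProductSpace

/-- the key estimate in the proof of Lemma 3.2.  Let `lam` be an
eigenvalue of the self-adjoint operator `T` with `k = dim ker(T − lam) < ∞` and
orthonormal basis `φ₁, …, φ_k` of `ker(T − lam)`.  Let `b > lam`, `ε > 0` and suppose
`u_j ∈ Dom T` satisfy `‖(T − b)(φ_j − u_j)‖ ≤ (1 + |b|) ε`.  Then for every unit vector
`x ∈ ker(T − lam)`,
`‖x − ∑ j (⟨φ_j, x⟩/(lam − b)) (T − b) u_j‖ ≤ k (1 + |b|) ε / (b − lam)`;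
in particular the (non-symmetric) subspace gap
`δ(ker(T − lam), (T − b)·span{u_j})` is at most `k (1 + |b|) ε / (b − lam)`. -/
theorem statement3
    {H : Type*} [NormedAddCommGroup H] [InnerProductSpace ℂ H] [CompleteSpace H]
    (T : PMap H H) (hT : T.IsSelfAdjoint)
    (lam : ℝ) (k : ℕ)
    (φ : Fin k → H) (hON : Orthonormal ℂ φ)
    (hφmem : ∀ j, φ j ∈ T.eigSp lam)
    (hφbasis : T.eigSp lam = Submodule.span ℂ (Set.range φ))
    (b : ℝ) (hb : lam < b) (ε : ℝ) (hε : 0 < ε)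
    (u : Fin k → H) (hu : ∀ j, u j ∈ T.dom)
    (hclose : ∀ j, ‖(T.toFun (φ j) - T.toFun (u j)) - (b : ℂ) • (φ j - u j)‖ ≤ (1 + |b|) * ε) :
    (∀ x ∈ T.eigSp lam, ‖x‖ = 1 →
      ‖x - ∑ j : Fin k, ((⟪φ j, x⟫) / ((lam : ℂ) - (b : ℂ))) •
          (T.toFun (u j) - (b : ℂ) • u j)‖ ≤ (k : ℝ) * (1 + |b|) * ε / (b - lam)) ∧
    (∀ x ∈ T.eigSp lam, ‖x‖ = 1 →
      Metric.infDist x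
          {y : H | ∃ v ∈ Submodule.span ℂ (Set.range u), y = T.toFun v - (b : ℂ) • v}
        ≤ (k : ℝ) * (1 + |b|) * ε / (b - lam)) := by
  have hlb : (lam : ℂ) - (b : ℂ) ≠ 0 := by
    rw [sub_ne_zero]
    exact_mod_cast hb.ne
  have hnlb : ‖(lam : ℂ) - (b : ℂ)‖ = b - lam := by
    rw [← Complex.ofReal_sub, Complex.norm_real, Real.norm_eq_abs, abs_sub_comm,
      abs_of_pos (sub_pos.mpr hb)]
  have hexp : ∀ x ∈ T.eigSp lam, x = ∑ j : Fin k, ⟪φ j, x⟫ • φ j := by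
    intro x hx
    rw [hφbasis] at hx
    obtain ⟨c, rfl⟩ := (Submodule.mem_span_range_iff_exists_fun ℂ).1 hx
    refine Finset.sum_congr rfl fun j _ => ?_
    rw [hON.inner_right_fintype]
  have main : ∀ x ∈ T.eigSp lam, ‖x‖ = 1 →
      ‖x - ∑ j : Fin k, ((⟪φ j, x⟫) / ((lam : ℂ) - (b : ℂ))) •
          (T.toFun (u j) - (b : ℂ) • u j)‖ ≤ (k : ℝ) * (1 + |b|) * ε / (b - lam) := by
    intro x hx hx1
    have hdiff : x - ∑ j : Fin k, ((⟪φ j, x⟫) / ((lam : ℂ) - (b : ℂ))) •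
          (T.toFun (u j) - (b : ℂ) • u j) =
        ∑ j : Fin k, ((⟪φ j, x⟫) / ((lam : ℂ) - (b : ℂ))) •
          ((T.toFun (φ j) - T.toFun (u j)) - (b : ℂ) • (φ j - u j)) := by
      conv_lhs => enter [1]; rw [hexp x hx]
      rw [← Finset.sum_sub_distrib]
      refine Finset.sum_congr rfl fun j _ => ?_
      have h1 : ⟪φ j, x⟫ • φ j = ((⟪φ j, x⟫) / ((lam : ℂ) - (b : ℂ))) •
          (T.toFun (φ j) - (b : ℂ) • φ j) := by
        rw [(hφmem j).2, ← sub_smul, smul_smul, div_mul_cancel₀ _ hlb]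
      rw [h1, ← smul_sub, smul_sub (b : ℂ)]
      congr 1
      abel
    rw [hdiff]
    calc _ ≤ ∑ j : Fin k, ((1 + |b|) * ε / (b - lam)) := by
          refine norm_sum_le_of_le _ fun j _ => ?_
          have hin : ‖⟪φ j, x⟫‖ ≤ 1 := by
            have := norm_inner_le_norm (𝕜 := ℂ) (φ j) x
            rwa [hON.1 j, hx1, one_mul] at this
          rw [norm_smul, norm_div, hnlb, div_mul_eq_mul_div]
          have hpos : 0 < b - lam := sub_pos.mpr hb
          refine div_le_div_of_nonneg_right ?_ hpos.le
          have h2 := mul_le_mul hin (hclose j) (norm_nonneg _) zero_le_one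
          rwa [one_mul] at h2
      _ = _ := by
          simp only [Finset.sum_const, Finset.card_univ, Fintype.card_fin, nsmul_eq_mul]
          ring
  refine ⟨main, fun x hx hx1 => ?_⟩
  have hsum : ∀ (c : Fin k → ℂ) (s : Finset (Fin k)),
      T.toFun (∑ j ∈ s, c j • u j) = ∑ j ∈ s, c j • T.toFun (u j) := by
    intro c s
    induction s using Finset.induction_on with
    | empty => simpa using T.map_smul' 0 0 T.dom.zero_mem
    | insert a s ha ih =>
      rw [Finset.sum_insert ha, Finset.sum_insert ha,
        T.map_add' _ (T.dom.smul_mem _ (hu a)) _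
          (T.dom.sum_mem fun j _ => T.dom.smul_mem _ (hu j)), ih, T.map_smul' _ _ (hu a)]
  refine le_trans (Metric.infDist_le_dist_of_mem (y := ∑ j : Fin k,
    ((⟪φ j, x⟫) / ((lam : ℂ) - (b : ℂ))) • (T.toFun (u j) - (b : ℂ) • u j)) ?_) ?_
  · refine ⟨∑ j : Fin k, ((⟪φ j, x⟫) / ((lam : ℂ) - (b : ℂ))) • u j,
      Submodule.sum_mem _ fun j _ => Submodule.smul_mem _ _
        (Submodule.subset_span ⟨j, rfl⟩), ?_⟩
    rw [hsum, Finset.smul_sum, ← Finset.sum_sub_distrib]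
    refine Finset.sum_congr rfl fun j _ => ?_
    rw [smul_sub, smul_comm (b : ℂ)]
  · rw [dist_eq_norm]
    exact main x hx hx1
end

section
/- Let T be a self-adjoint operator on a Hilbert space H, let φ be a unit vector with Tφ = λφ for some λ > 0, and let (ψ_n) be unit eigenvectors of T orthogonal to φ with Tψ_n = μ_n ψ_n and μ_n → ∞. Set ε_n = 1/μ_n, α_n = (1−ε_n²)^{1/2}, and u_n = α_n φ + ε_n ψ_n. Then ⟨T u_n, u_n⟩/‖T u_n‖² → λ/(λ²+1) as n → ∞, and this limit is strictly less than 1/λ. Moreover, for any real b, ⟨(T−b)u_n,u_n⟩/‖(T−b)u_n‖² → (λ−b)/((λ−b)²+1), which is strictly less than 1/(λ−b) when λ > b. In particular, the Zimmermann–Mertins inverse residuals evaluated along the trial vectors u_n do not converge to the reciprocals of the spectral gaps, so the resulting eigenvalue enclosure for λ does not shrink to zero. -/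
open Filter Topology
open scoped ComplexInnerProductSpace

theorem re_inner_comb {H : Type*} [NormedAddCommGroup H] [InnerProductSpace ℂ H]
    (f g : H) (hf : ‖f‖ = 1) (hg : ‖g‖ = 1) (h : ⟪f, g⟫ = 0) (a e c d : ℝ) :
    (⟪(c : ℂ) • f + (d : ℂ) • g, (a : ℂ) • f + (e : ℂ) • g⟫).re = c * a + d * e := by
  have h' : ⟪g, f⟫ = 0 := inner_eq_zero_symm.mp h
  simp only [inner_add_left, inner_add_right, inner_smul_left, inner_smul_right, h, h',
    inner_self_eq_norm_sq_to_K, hf, hg]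
  simp
  ring

theorem norm_sq_comb {H : Type*} [NormedAddCommGroup H] [InnerProductSpace ℂ H]
    (f g : H) (hf : ‖f‖ = 1) (hg : ‖g‖ = 1) (h : ⟪f, g⟫ = 0) (c d : ℝ) :
    ‖(c : ℂ) • f + (d : ℂ) • g‖ ^ 2 = c * c + d * d := by
  rw [← re_inner_comb f g hf hg h c d c d]
  exact (inner_self_eq_norm_sq (𝕜 := ℂ) _).symm

/-- the abstract computation underlying Example 3.3.  Let `φ` be a unit
eigenvector of the self-adjoint operator `T` with eigenvalue `lam > 0`, and let `ψ n` be
unit eigenvectors orthogonal to `φ`, with eigenvalues `μ n → ∞`.  Put `ε n = 1/μ n`,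
`α n = √(1 − ε n ²)` and `u n = α n • φ + ε n • ψ n`.  Then
`⟨T u_n, u_n⟩ / ‖T u_n‖² → lam/(lam²+1) < 1/lam`, and for every real `b`,
`⟨(T−b)u_n, u_n⟩ / ‖(T−b)u_n‖² → (lam−b)/((lam−b)²+1)`, which is `< 1/(lam−b)` when
`lam > b`: the Zimmermann–Mertins inverse residuals along these trial vectors do not
converge to the reciprocals of the spectral gaps. -/
theorem statement4
    {H : Type*} [NormedAddCommGroup H] [InnerProductSpace ℂ H] [CompleteSpace H]
    (T : PMap H H) (hT : T.IsSelfAdjoint)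
    (φ : H) (hφdom : φ ∈ T.dom) (hφnorm : ‖φ‖ = 1)
    (lam : ℝ) (hlam : 0 < lam) (hTφ : T.toFun φ = (lam : ℂ) • φ)
    (ψ : ℕ → H) (hψdom : ∀ n, ψ n ∈ T.dom) (hψnorm : ∀ n, ‖ψ n‖ = 1)
    (horth : ∀ n, ⟪φ, ψ n⟫ = 0)
    (μ : ℕ → ℝ) (hTψ : ∀ n, T.toFun (ψ n) = (μ n : ℂ) • ψ n)
    (hμ : Tendsto μ atTop atTop)
    (ε α : ℕ → ℝ) (hε : ∀ n, ε n = 1 / μ n) (hα : ∀ n, α n = Real.sqrt (1 - ε n ^ 2))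
    (u : ℕ → H) (hu : ∀ n, u n = (α n : ℂ) • φ + (ε n : ℂ) • ψ n) :
    Tendsto (fun n => (⟪T.toFun (u n), u n⟫).re / ‖T.toFun (u n)‖ ^ 2)
        atTop (𝓝 (lam / (lam ^ 2 + 1))) ∧
    lam / (lam ^ 2 + 1) < 1 / lam ∧
    (∀ b : ℝ,
      Tendsto
        (fun n => (⟪T.toFun (u n) - (b : ℂ) • u n, u n⟫).re /
          ‖T.toFun (u n) - (b : ℂ) • u n‖ ^ 2)
        atTop (𝓝 ((lam - b) / ((lam - b) ^ 2 + 1)))) ∧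
    (∀ b : ℝ, b < lam → (lam - b) / ((lam - b) ^ 2 + 1) < 1 / (lam - b)) := by
  have lt_aux : ∀ x : ℝ, 0 < x → x / (x ^ 2 + 1) < 1 / x := by
    intro x hx
    rw [div_lt_div_iff₀ (by positivity) hx]
    nlinarith
  have hε0 : Tendsto ε atTop (𝓝 0) := by
    have : ε = fun n => (μ n)⁻¹ := by
      funext n
      rw [hε, one_div]
    rw [this]
    exact tendsto_inv_atTop_zero.comp hμ
  have hα1 : Tendsto α atTop (𝓝 1) := by
    have h1 : Tendsto (fun n => Real.sqrt (1 - ε n ^ 2)) atTop (𝓝 (Real.sqrt (1 - 0 ^ 2))) :=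
      (tendsto_const_nhds.sub (hε0.pow 2)).sqrt
    have : α = fun n => Real.sqrt (1 - ε n ^ 2) := funext hα
    rw [this]
    simpa using h1
  have hεμ : Tendsto (fun n => ε n * μ n) atTop (𝓝 1) := by
    refine tendsto_const_nhds.congr' ?_
    filter_upwards [hμ.eventually_gt_atTop 0] with n hn
    rw [hε, one_div, inv_mul_cancel₀ hn.ne']
  have main : ∀ b : ℝ,
      Tendsto
        (fun n => (⟪T.toFun (u n) - (b : ℂ) • u n, u n⟫).re /
          ‖T.toFun (u n) - (b : ℂ) • u n‖ ^ 2)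
        atTop (𝓝 ((lam - b) / ((lam - b) ^ 2 + 1))) := by
    intro b
    have hTu : ∀ n, T.toFun (u n) - (b : ℂ) • u n =
        ((α n * (lam - b) : ℝ) : ℂ) • φ + ((ε n * μ n - b * ε n : ℝ) : ℂ) • ψ n := by
      intro n
      rw [hu, T.map_add' _ (T.dom.smul_mem _ hφdom) _ (T.dom.smul_mem _ (hψdom n)),
        T.map_smul' _ _ hφdom, T.map_smul' _ _ (hψdom n), hTφ, hTψ]
      push_cast
      module
    have hA := hα1.mul_const (lam - b)
    have hB := hεμ.sub (hε0.const_mul b)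
    have hN := (hA.mul hα1).add (hB.mul hε0)
    have hD := (hA.mul hA).add (hB.mul hB)
    have hne : 1 * (lam - b) * (1 * (lam - b)) + (1 - b * 0) * (1 - b * 0) ≠ 0 := by
      nlinarith [sq_nonneg (lam - b)]
    have hQ := hN.div hD hne
    have hl : (1 * (lam - b) * 1 + (1 - b * 0) * 0) /
        (1 * (lam - b) * (1 * (lam - b)) + (1 - b * 0) * (1 - b * 0)) =
        (lam - b) / ((lam - b) ^ 2 + 1) := by
      congr 1 <;> ring
    rw [hl] at hQ
    refine hQ.congr fun n => ?_
    rw [hTu, norm_sq_comb φ (ψ n) hφnorm (hψnorm n) (horth n), hu,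
      re_inner_comb φ (ψ n) hφnorm (hψnorm n) (horth n)]
    rfl
  refine ⟨?_, lt_aux lam hlam, main, fun b hb => lt_aux _ (sub_pos.mpr hb)⟩
  simpa using main 0
end

section
/- Let T be a nonnegative self-adjoint operator on a Hilbert space H possessing an orthonormal basis of eigenvectors (φ_j)_{j≥1} with Tφ_j = λ_j φ_j, λ_j ≥ 0, and λ_{3n} → ∞ as n → ∞. Set ε_n = 1/λ_{3n}, α_n = (1−ε_n²)^{1/2}, and 𝓛_n = span{α_n φ₁ + ε_n φ_{3n}, φ₂, …, φ_{3n−1}}. Then 𝓛_n ⊆ Dom(T) for every n, and (𝓛_n) ∈ Λ(𝔱): for every u ∈ Dom(𝔱), dist_𝔱[u, 𝓛_n] → 0 as n → ∞. -/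
open Filter Topology
open scoped ComplexInnerProductSpace

section FormNorm

variable {H : Type*} [NormedAddCommGroup H] [InnerProductSpace ℂ H]

/-- The form domain `Dom(𝔱)` of a nonnegative self-adjoint operator expressed in an
orthonormal eigenbasis `φ` with eigenvalues `lam`:
`u ∈ Dom(𝔱) ↔ Σ_j (1 + λ_j)|⟨φ_j, u⟩|² < ∞`. -/
def formDom (φ : ℕ+ → H) (lam : ℕ+ → ℝ) : Set H :=
  {u | Summable fun j => (1 + lam j) * ‖(⟪φ j, u⟫ : ℂ)‖ ^ 2}

/-- The form norm `‖u‖_𝔱 = (Σ_j (1 + λ_j)|⟨φ_j, u⟩|²)^{1/2}` in the eigenbasis. -/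
noncomputable def formNorm (φ : ℕ+ → H) (lam : ℕ+ → ℝ) (u : H) : ℝ :=
  Real.sqrt (∑' j, (1 + lam j) * ‖(⟪φ j, u⟫ : ℂ)‖ ^ 2)

/-- The distance from `u` to the set `L` in the form norm. -/
noncomputable def formDist (φ : ℕ+ → H) (lam : ℕ+ → ℝ) (u : H) (L : Set H) : ℝ :=
  sInf {r | ∃ v ∈ L, r = formNorm φ lam (u - v)}

end FormNorm

/-- Example 3.3 of the paper.  Let `T` be a nonnegative self-adjoint
operator with an orthonormal basis of eigenvectors `(φ_j)_{j ≥ 1}`, `T φ_j = λ_j φ_j`,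
`λ_j ≥ 0` and `λ_{3n} → ∞`.  With `ε n = 1/λ_{3n}`, `α n = √(1 − ε n²)` and
`L n = span{α n φ₁ + ε n φ_{3n}, φ₂, …, φ_{3n−1}}`, each `L n` is contained in `Dom T`
and `(L n) ∈ Λ(𝔱)`: `dist_𝔱[u, L n] → 0` for every `u` in the form domain. -/
theorem statement5
    {H : Type*} [NormedAddCommGroup H] [InnerProductSpace ℂ H] [CompleteSpace H]
    (T : PMap H H) (hT : T.IsSelfAdjoint)
    (hnonneg : ∀ x ∈ T.dom, 0 ≤ (⟪T.toFun x, x⟫ : ℂ).re)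
    (φ : ℕ+ → H) (hφdom : ∀ j, φ j ∈ T.dom)
    (lam : ℕ+ → ℝ) (hlam0 : ∀ j, 0 ≤ lam j)
    (heig : ∀ j, T.toFun (φ j) = (lam j : ℂ) • φ j)
    (hON : Orthonormal ℂ φ)
    (hbasis : (Submodule.span ℂ (Set.range φ)).topologicalClosure = ⊤)
    (hdiv : Tendsto (fun n : ℕ+ => lam (3 * n)) atTop atTop)
    (ε α : ℕ+ → ℝ)
    (hε : ∀ n, ε n = 1 / lam (3 * n)) (hα : ∀ n, α n = Real.sqrt (1 - ε n ^ 2))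
    (L : ℕ+ → Submodule ℂ H)
    (hL : ∀ n, L n = Submodule.span ℂ
      ({(α n : ℂ) • φ 1 + (ε n : ℂ) • φ (3 * n)} ∪ (φ '' Set.Icc 2 (3 * n - 1)))) :
    (∀ n, (L n : Set H) ⊆ T.dom) ∧
    (∀ u ∈ formDom φ lam, Tendsto (fun n : ℕ+ => formDist φ lam u (L n)) atTop (𝓝 0)) := by
  refine ⟨?_, ?_⟩
  · intro n
    rw [hL n]
    refine Submodule.span_le.mpr ?_
    rintro x (hx | ⟨j, -, rfl⟩)
    · rw [Set.mem_singleton_iff] at hx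
      rw [hx]
      exact T.dom.add_mem (T.dom.smul_mem _ (hφdom _)) (T.dom.smul_mem _ (hφdom _))
    · exact hφdom j
  intro u hu
  have hu' : Summable fun j => (1 + lam j) * ‖(⟪φ j, u⟫ : ℂ)‖ ^ 2 := hu
  have hin : ∀ i j, (⟪φ i, φ j⟫ : ℂ) = if i = j then 1 else 0 := orthonormal_iff_ite.mp hON
  set c : ℕ+ → ℂ := fun j => ⟪φ j, u⟫ with hc
  set w : ℕ+ → ℝ := fun j => (1 + lam j) * ‖c j‖ ^ 2 with hw
  have hw0 : ∀ j, 0 ≤ w j := fun j =>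
    mul_nonneg (by linarith [hlam0 j]) (sq_nonneg _)
  have hws : Summable w := hu'
  -- the approximants
  let v : ℕ+ → H := fun n => c 1 • ((α n : ℂ) • φ 1 + (ε n : ℂ) • φ (3 * n)) +
    ∑ j ∈ Finset.Icc 2 (3 * n - 1), c j • φ j
  have hv : ∀ n, v n ∈ L n := by
    intro n
    rw [hL n]
    refine Submodule.add_mem _ (Submodule.smul_mem _ _ (Submodule.subset_span (Or.inl rfl))) ?_
    refine Submodule.sum_mem _ fun j hj => Submodule.smul_mem _ _ (Submodule.subset_span ?_)
    exact Or.inr ⟨j, by simpa using hj, rfl⟩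
  have hcoef : ∀ n k, (⟪φ k, u - v n⟫ : ℂ) = c k - (c 1 * ((α n : ℂ) * (if k = 1 then 1 else 0)
      + (ε n : ℂ) * (if k = 3 * n then 1 else 0)) +
      if k ∈ Finset.Icc 2 (3 * n - 1) then c k else 0) := by
    intro n k
    simp only [v, inner_sub_right, inner_add_right, inner_smul_right, inner_sum, hin]
    simp [hc]
  have h3n : ∀ n : ℕ+, (1 : ℕ+) < 3 * n := by
    intro n
    rw [← PNat.coe_lt_coe]
    have := n.pos
    push_cast
    norm_num
    omega
  have hmem : ∀ n k : ℕ+, k ∈ Finset.Icc 2 (3 * n - 1) ↔ k ≠ 1 ∧ k < 3 * n := by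
    intro n k
    have h1 := h3n n
    rw [Finset.mem_Icc, ← PNat.coe_le_coe, ← PNat.coe_le_coe, PNat.sub_coe, if_pos h1, Ne,
      ← PNat.coe_inj, ← PNat.coe_lt_coe]
    have hk := k.pos
    have hn := n.pos
    have a1 : ((1 : ℕ+) : ℕ) = 1 := rfl
    have a2 : ((2 : ℕ+) : ℕ) = 2 := rfl
    have a3 : ((3 * n : ℕ+) : ℕ) = 3 * (n : ℕ) := rfl
    rw [a1, a2, a3]
    omega
  let A : ℕ+ → ℝ := fun n => (1 + lam 1) * ((1 - α n) ^ 2 * ‖c 1‖ ^ 2)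
  let B : ℕ+ → ℝ := fun n => 2 * ((1 + lam (3 * n)) * (ε n ^ 2 * ‖c 1‖ ^ 2))
  let t : ℕ+ → ℕ+ → ℝ := fun n j => if 3 * n ≤ j then w j else 0
  have hA0 : ∀ n, 0 ≤ A n := fun n => mul_nonneg (by linarith [hlam0 1]) (by positivity)
  have hB0 : ∀ n, 0 ≤ B n := fun n => by
    have := hlam0 (3 * n)
    simp only [B]
    positivity
  have ht0 : ∀ n j, 0 ≤ t n j := fun n j => by
    simp only [t]; split_ifs
    · exact hw0 j
    · exact le_rfl
  have htw : ∀ n j, t n j ≤ w j := fun n j => by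
    simp only [t]; split_ifs
    · exact le_rfl
    · exact hw0 j
  have hts : ∀ n, Summable (t n) := fun n => Summable.of_nonneg_of_le (ht0 n) (htw n) hws
  have hbd : ∀ n k, (1 + lam k) * ‖(⟪φ k, u - v n⟫ : ℂ)‖ ^ 2 ≤
      2 * t n k + ((if k = 1 then A n else 0) + (if k = 3 * n then B n else 0)) := by
    intro n k
    have h1 := h3n n
    rw [hcoef]
    by_cases hk1 : k = 1
    · subst hk1
      have e1 : (1 : ℕ+) ∉ Finset.Icc 2 (3 * n - 1) := by rw [hmem]; simp
      have e : c 1 - (c 1 * ((α n : ℂ) * 1 + (ε n : ℂ) * 0) + 0)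
          = ((1 - α n : ℝ) : ℂ) * c 1 := by push_cast; ring
      rw [if_pos rfl, if_neg h1.ne, if_neg e1, if_pos rfl, if_neg h1.ne, e, norm_mul, mul_pow,
        Complex.norm_real, Real.norm_eq_abs, sq_abs]
      have := ht0 n 1
      simp only [A]
      linarith
    by_cases hk3 : k = 3 * n
    · subst hk3
      have e1 : 3 * n ∉ Finset.Icc 2 (3 * n - 1) := by rw [hmem]; simp
      have e : c (3 * n) - (c 1 * ((α n : ℂ) * 0 + (ε n : ℂ) * 1) + 0)
          = c (3 * n) - (ε n : ℂ) * c 1 := by ring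
      rw [if_neg hk1, if_pos rfl, if_neg e1, if_neg hk1, if_pos rfl, e]
      have e2 : ‖c (3 * n) - (ε n : ℂ) * c 1‖ ≤ ‖c (3 * n)‖ + |ε n| * ‖c 1‖ := by
        refine (norm_sub_le _ _).trans ?_
        rw [norm_mul, Complex.norm_real, Real.norm_eq_abs]
      have e3 : ‖c (3 * n) - (ε n : ℂ) * c 1‖ ^ 2 ≤
          2 * ‖c (3 * n)‖ ^ 2 + 2 * (ε n ^ 2 * ‖c 1‖ ^ 2) := by
        have := pow_le_pow_left₀ (norm_nonneg _) e2 2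
        rw [← sq_abs (ε n)]
        nlinarith [sq_nonneg (‖c (3 * n)‖ - |ε n| * ‖c 1‖)]
      have e4 : t n (3 * n) = (1 + lam (3 * n)) * ‖c (3 * n)‖ ^ 2 := by simp [t, hw]
      rw [e4]
      have := mul_le_mul_of_nonneg_left e3 (by linarith [hlam0 (3 * n)] : 0 ≤ 1 + lam (3 * n))
      simp only [B]
      linarith
    · rw [if_neg hk1, if_neg hk3, if_neg hk1, if_neg hk3]
      by_cases hlt : k < 3 * n
      · rw [if_pos ((hmem n k).mpr ⟨hk1, hlt⟩)]
        have := ht0 n k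
        simp
        linarith
      · rw [if_neg (fun h => hlt ((hmem n k).mp h).2)]
        have e4 : t n k = (1 + lam k) * ‖c k‖ ^ 2 := by
          simp only [t, hw]; rw [if_pos (not_lt.mp hlt)]
        have := ht0 n k
        rw [e4] at this ⊢
        simp
        linarith
  have hsA : ∀ n, HasSum (fun k : ℕ+ => if k = 1 then A n else 0) (A n) := fun n =>
    hasSum_ite_eq 1 (A n)
  have hsB : ∀ n, HasSum (fun k : ℕ+ => if k = 3 * n then B n else 0) (B n) := fun n =>
    hasSum_ite_eq (3 * n) (B n)
  have hG : ∀ n, HasSum (fun k => 2 * t n k +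
      ((if k = 1 then A n else 0) + (if k = 3 * n then B n else 0)))
      (2 * (∑' k, t n k) + (A n + B n)) := fun n =>
    ((hts n).hasSum.mul_left 2).add ((hsA n).add (hsB n))
  have hle : ∀ n, formNorm φ lam (u - v n) ≤ Real.sqrt (2 * (∑' k, t n k) + (A n + B n)) := by
    intro n
    refine Real.sqrt_le_sqrt ?_
    rw [← (hG n).tsum_eq]
    refine Summable.tsum_le_tsum (hbd n) ?_ (hG n).summable
    exact Summable.of_nonneg_of_le
      (fun k => mul_nonneg (by linarith [hlam0 k]) (sq_nonneg _)) (hbd n) (hG n).summable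
  have hεt : Tendsto ε atTop (𝓝 0) := by
    have : ε = fun n => (lam (3 * n))⁻¹ := by funext n; rw [hε n, one_div]
    rw [this]
    exact hdiv.inv_tendsto_atTop
  have hαt : Tendsto α atTop (𝓝 1) := by
    have : α = fun n => Real.sqrt (1 - ε n ^ 2) := funext hα
    rw [this]
    simpa using ((hεt.pow 2).const_sub 1).sqrt
  have hAt : Tendsto A atTop (𝓝 0) := by
    simpa using ((((hαt.const_sub 1).pow 2).mul_const (‖c 1‖ ^ 2)).const_mul (1 + lam 1))
  have hBt : Tendsto B atTop (𝓝 0) := by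
    have h1 : Tendsto (fun n => 2 * ((ε n ^ 2 + ε n) * ‖c 1‖ ^ 2)) atTop (𝓝 0) := by
      simpa using (((hεt.pow 2).add hεt).mul_const (‖c 1‖ ^ 2)).const_mul 2
    refine h1.congr fun n => ?_
    have : ε n = lam (3 * n) * ε n ^ 2 := by
      rw [hε n]
      by_cases h : lam (3 * n) = 0
      · simp [h]
      · field_simp
    simp only [B]
    linear_combination 2 * ‖c 1‖ ^ 2 * this
  have htt : Tendsto (fun n => ∑' k, t n k) atTop (𝓝 0) := by
    have := tendsto_tsum_of_dominated_convergence (f := t) (g := fun _ => (0 : ℝ)) (𝓕 := atTop)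
      (bound := w) hws ?_ ?_
    · simpa using this
    · intro k
      refine tendsto_const_nhds.congr' ?_
      filter_upwards [eventually_ge_atTop k] with n hn
      simp only [t]
      rw [if_neg]
      rw [not_le, ← PNat.coe_lt_coe]
      rw [← PNat.coe_le_coe] at hn
      have := k.pos
      push_cast
      norm_num
      omega
    · refine Eventually.of_forall fun n k => ?_
      rw [Real.norm_eq_abs, abs_of_nonneg (ht0 n k)]
      exact htw n k
  have hlim : Tendsto (fun n => Real.sqrt (2 * (∑' k, t n k) + (A n + B n))) atTop (𝓝 0) := by
    simpa using ((htt.const_mul 2).add (hAt.add hBt)).sqrt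
  refine squeeze_zero (fun n => ?_) (fun n => ?_) hlim
  · refine Real.sInf_nonneg ?_
    rintro r ⟨x, -, rfl⟩
    exact Real.sqrt_nonneg _
  · refine le_trans (csInf_le ⟨0, ?_⟩ ⟨v n, hv n, rfl⟩) (hle n)
    rintro r ⟨x, -, rfl⟩
    exact Real.sqrt_nonneg _
end

section
/- Let M₀ = [[A,B],[B*,D]] be a top-dominant block operator matrix satisfying conditions (i)–(iii), with self-adjoint closure M, d = max Spec(D), λ_e = inf(Spec_ess(M) ∩ (d,∞)), and Schur complement S(μ). Then the spectra of S and M coincide on (d, λ_e); Spec_ess(S) ∩ (d, λ_e) = ∅, i.e., for every λ ∈ (d, λ_e) one has 0 ∉ Spec_ess(S(λ)); and for every eigenvalue λ_j of M in (d, λ_e), dim ker(S(λ_j)) = dim ker(M − λ_j). -/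
open Filter Topology
open scoped ComplexInnerProductSpace

/-- The Schur form `s(μ)[x,y] = 𝔞[x,y] − μ⟨x,y⟩ − ⟨(D−μ)⁻¹ B*x, B*y⟩`, where `fa` is the
closed form of `A`, `Bs = B*`, and `RD μ = (D−μ)⁻¹` is the resolvent of `D`. -/
noncomputable def schurForm {H1 H2 : Type*} [NormedAddCommGroup H1] [InnerProductSpace ℂ H1]
    [NormedAddCommGroup H2] [InnerProductSpace ℂ H2]
    (fa : H1 → H1 → ℂ) (Bs : PMap H1 H2) (RD : ℂ → (H2 →L[ℂ] H2)) (μ : ℂ) (x y : H1) : ℂ :=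
  fa x y - μ * ⟪x, y⟫ - ⟪RD μ (Bs.toFun x), Bs.toFun y⟫

namespace SchurAux

section gen
variable {E : Type*} [NormedAddCommGroup E] [InnerProductSpace ℂ E]

lemma weakNull_of_dense (f : ℕ → E) (C : ℝ) (hb : ∀ n, ‖f n‖ ≤ C) (P : Set E) (hP : Dense P)
    (h : ∀ y ∈ P, Tendsto (fun n => (⟪y, f n⟫ : ℂ)) atTop (𝓝 0)) (y : E) :
    Tendsto (fun n => (⟪y, f n⟫ : ℂ)) atTop (𝓝 0) := by
  rw [Metric.tendsto_atTop]
  intro ε hε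
  have hC : 0 ≤ C := (norm_nonneg _).trans (hb 0)
  have hpos : 0 < ε / (2 * (C + 1)) := by positivity
  obtain ⟨p, hpP, hp⟩ := Metric.dense_iff.1 hP y _ hpos
  obtain ⟨N, hN⟩ := Metric.tendsto_atTop.1 (h _ hp) (ε / 2) (by positivity)
  refine ⟨N, fun n hn => ?_⟩
  have h1 := hN n hn
  rw [dist_zero_right] at h1 ⊢
  have h2 : (⟪y, f n⟫ : ℂ) = ⟪y - p, f n⟫ + ⟪p, f n⟫ := by rw [inner_sub_left]; ring
  have h3 : ‖y - p‖ < ε / (2 * (C + 1)) := by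
    rw [← dist_eq_norm, dist_comm]; exact hpP
  have h4 : ‖(⟪y - p, f n⟫ : ℂ)‖ ≤ ε / (2 * (C + 1)) * C :=
    (norm_inner_le_norm _ _).trans (mul_le_mul h3.le (hb n) (norm_nonneg _) hpos.le)
  have h5 : ε / (2 * (C + 1)) * C ≤ ε / 2 := by
    rw [div_mul_eq_mul_div, div_le_div_iff₀ (by positivity) (by positivity)]
    nlinarith
  rw [h2]
  calc _ ≤ _ := norm_add_le _ _
    _ < _ := by linarith

lemma symm_of {T : PMap E E} (hT : T.IsSelfAdjoint) {x y : E} (hx : x ∈ T.dom) (hy : y ∈ T.dom) :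
    (⟪T.toFun x, y⟫ : ℂ) = ⟪x, T.toFun y⟫ :=
  (hT.2 y (T.toFun y)).2 ⟨hy, rfl⟩ x hx

lemma symm_shift {T : PMap E E} (hT : T.IsSelfAdjoint) (t : ℝ) {x y : E} (hx : x ∈ T.dom)
    (hy : y ∈ T.dom) :
    (⟪T.toFun x - (t : ℂ) • x, y⟫ : ℂ) = ⟪x, T.toFun y - (t : ℂ) • y⟫ := by
  rw [inner_sub_left, inner_sub_right, symm_of hT hx hy, inner_smul_left, inner_smul_right]
  simp

lemma mem_of_shift {T : PMap E E} (hT : T.IsSelfAdjoint) (t : ℝ) {y z : E}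
    (h : ∀ x ∈ T.dom, (⟪T.toFun x - (t : ℂ) • x, y⟫ : ℂ) = ⟪x, z⟫) :
    y ∈ T.dom ∧ T.toFun y - (t : ℂ) • y = z := by
  have := (hT.2 y (z + (t : ℂ) • y)).1 (by
    intro x hx
    have h1 := h x hx
    rw [inner_sub_left, inner_smul_left] at h1
    rw [inner_add_right, inner_smul_right, ← h1]
    simp)
  exact ⟨this.1, by rw [← this.2]; simp⟩

/-- The linear map `T - t` on the domain. -/
noncomputable def shiftMap (T : PMap E E) (t : ℝ) : T.dom →ₗ[ℂ] E where
  toFun x := T.toFun x - (t : ℂ) • (x : E)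
  map_add' x y := by
    simp only [Submodule.coe_add, T.map_add' x x.2 y y.2, smul_add]; abel
  map_smul' c x := by
    simp only [Submodule.coe_smul, T.map_smul' c x x.2, smul_sub, RingHom.id_apply]
    rw [smul_comm]

lemma resolvent_of_not_ess [CompleteSpace E] {T : PMap E E} (hT : T.IsSelfAdjoint) (t : ℝ)
    (hess : t ∉ T.specEssR) (hker : T.eigSp t = ⊥) : (t : ℂ) ∈ T.resolventSet := by
  have hL : ∀ x : T.dom, shiftMap T t x = T.toFun x - (t : ℂ) • (x : E) := fun _ => rfl
  -- dense range
  have hdense : Dense ((LinearMap.range (shiftMap T t) : Submodule ℂ E) : Set E) := by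
    rw [Submodule.dense_iff_topologicalClosure_eq_top, Submodule.topologicalClosure_eq_top_iff,
      Submodule.eq_bot_iff]
    intro y hy
    rw [Submodule.mem_orthogonal] at hy
    have := mem_of_shift hT t (y := y) (z := 0) (by
      intro x hx
      rw [inner_zero_right]
      exact hy _ ⟨⟨x, hx⟩, rfl⟩)
    have h2 : y ∈ T.eigSp t := ⟨this.1, sub_eq_zero.1 this.2⟩
    rw [hker] at h2
    exact h2
  -- bounded below
  have hbb : ∃ c : ℝ, 0 < c ∧ ∀ x ∈ T.dom, c * ‖x‖ ≤ ‖T.toFun x - (t : ℂ) • x‖ := by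
    by_contra hcon
    push Not at hcon
    have hex : ∀ n : ℕ, ∃ x ∈ T.dom, ‖x‖ = 1 ∧ ‖T.toFun x - (t : ℂ) • x‖ < 1 / ((n : ℝ) + 1) := by
      intro n
      obtain ⟨x, hx, hlt⟩ := hcon (1 / ((n : ℝ) + 1)) (by positivity)
      have hx0 : 0 < ‖x‖ := by
        rcases (norm_nonneg x).eq_or_lt with h0 | h0
        · rw [← h0, mul_zero] at hlt
          exact absurd hlt (not_lt.2 (norm_nonneg _))
        · exact h0
      refine ⟨((‖x‖⁻¹ : ℝ) : ℂ) • x, T.dom.smul_mem _ hx, ?_, ?_⟩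
      · rw [norm_smul]; simp [hx0.ne']
      · rw [T.map_smul' _ x hx, smul_comm, ← smul_sub, norm_smul]
        simp only [Complex.norm_real, norm_inv, norm_norm]
        rw [inv_mul_lt_iff₀ hx0, mul_comm]
        exact hlt
    choose f hf1 hf2 hf3 using hex
    refine hess ⟨f, hf1, hf2, ?_, ?_⟩
    · have hz : Tendsto (fun n => ‖T.toFun (f n) - (t : ℂ) • f n‖) atTop (𝓝 0) :=
        squeeze_zero (fun _ => norm_nonneg _) (fun n => (hf3 n).le)
          tendsto_one_div_add_atTop_nhds_zero_nat
      refine weakNull_of_dense f 1 (fun n => (hf2 n).le) _ hdense ?_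
      rintro _ ⟨g, rfl⟩
      have hz2 := (tendsto_zero_iff_norm_tendsto_zero.2 hz)
      have := (tendsto_const_nhds (x := (g : E))).inner (𝕜 := ℂ) hz2
      rw [inner_zero_right] at this
      refine this.congr (fun n => ?_)
      rw [hL, symm_shift hT t g.2 (hf1 n)]
    · exact squeeze_zero (fun _ => norm_nonneg _) (fun n => (hf3 n).le)
          tendsto_one_div_add_atTop_nhds_zero_nat
  obtain ⟨c, hc, hcb⟩ := hbb
  have hinj : Function.Injective (shiftMap T t) := by
    rw [← LinearMap.ker_eq_bot, LinearMap.ker_eq_bot']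
    intro x hx
    have h1 := hcb x x.2
    rw [← hL, hx, norm_zero] at h1
    have : ‖(x : E)‖ = 0 := by
      have := norm_nonneg (x : E)
      nlinarith
    exact Subtype.ext (norm_eq_zero.1 this)
  have hsurj : Function.Surjective (shiftMap T t) := by
    intro y
    obtain ⟨u, hu, huy⟩ := mem_closure_iff_seq_limit.1 (hdense y)
    choose x hx using hu
    have hcau : CauchySeq (fun n => (x n : E)) := by
      rw [Metric.cauchySeq_iff']
      intro ε hε
      obtain ⟨N, hN⟩ := Metric.cauchySeq_iff'.1 huy.cauchySeq (c * ε) (by positivity)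
      refine ⟨N, fun n hn => ?_⟩
      have h1 := hN n hn
      rw [← hx n, ← hx N, dist_eq_norm, ← map_sub] at h1
      have h2 := hcb _ (x n - x N).2
      rw [← hL] at h2
      rw [dist_eq_norm]
      exact lt_of_mul_lt_mul_left (h2.trans_lt h1) hc.le
    obtain ⟨v, hv⟩ := cauchySeq_tendsto_of_complete hcau
    have := mem_of_shift hT t (y := v) (z := y) (by
      intro w hw
      have h1 := (tendsto_const_nhds (x := T.toFun w - (t : ℂ) • w)).inner (𝕜 := ℂ) hv
      have h2 := (tendsto_const_nhds (x := w)).inner (𝕜 := ℂ) huy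
      refine tendsto_nhds_unique h1 (h2.congr fun n => ?_)
      rw [symm_shift hT t hw (x n).2, ← hx n]; rfl)
    exact ⟨⟨v, this.1⟩, this.2⟩
  let e := LinearEquiv.ofBijective (shiftMap T t) ⟨hinj, hsurj⟩
  refine ⟨LinearMap.mkContinuous (T.dom.subtype ∘ₗ e.symm.toLinearMap) c⁻¹ ?_, ?_, ?_⟩
  · intro y
    have h1 := hcb _ (e.symm y).2
    have h2 : T.toFun (e.symm y) - (t : ℂ) • (e.symm y : E) = y := e.apply_symm_apply y
    rw [h2] at h1
    rw [← div_eq_inv_mul, le_div_iff₀ hc, mul_comm]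
    exact h1
  · intro x hx
    have : e.symm (T.toFun x - (t : ℂ) • x) = ⟨x, hx⟩ := e.symm_apply_apply ⟨x, hx⟩
    exact congrArg Subtype.val this
  · intro y
    exact ⟨(e.symm y).2, e.apply_symm_apply y⟩

end gen

section pair
variable {H1 H2 : Type*} [NormedAddCommGroup H1] [InnerProductSpace ℂ H1]
  [NormedAddCommGroup H2] [InnerProductSpace ℂ H2]

/-- The pair as an element of the Hilbert sum. -/
noncomputable def J (x : H1) (y : H2) : WithLp 2 (H1 × H2) :=
  (WithLp.equiv 2 (H1 × H2)).symm (x, y)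

lemma J_surj (p : WithLp 2 (H1 × H2)) : ∃ x y, p = J x y := ⟨p.fst, p.snd, rfl⟩
lemma J_inj {a c : H1} {b d : H2} (h : J a b = J c d) : a = c ∧ b = d := by
  have := (WithLp.equiv 2 (H1 × H2)).symm.injective h
  exact Prod.mk.inj this
lemma J_inner (a c : H1) (b d : H2) : (⟪J a b, J c d⟫ : ℂ) = ⟪a, c⟫ + ⟪b, d⟫ := rfl
lemma J_sub (a c : H1) (b d : H2) : J a b - J c d = J (a - c) (b - d) := rfl
lemma J_add (a c : H1) (b d : H2) : J a b + J c d = J (a + c) (b + d) := rfl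
lemma J_smul (z : ℂ) (a : H1) (b : H2) : z • J a b = J (z • a) (z • b) := rfl
lemma J_zero : J (0 : H1) (0 : H2) = 0 := rfl
lemma J_norm_sq (a : H1) (b : H2) : ‖J a b‖ ^ 2 = ‖a‖ ^ 2 + ‖b‖ ^ 2 :=
  WithLp.prod_norm_sq_eq_of_L2 _
lemma J_norm_zero (a : H1) : ‖J a (0 : H2)‖ = ‖a‖ := by
  have := J_norm_sq a (0 : H2)
  rw [norm_zero] at this
  exact (sq_eq_sq₀ (norm_nonneg _) (norm_nonneg _)).1 (by linarith)
lemma J_norm_ge (a : H1) (b : H2) : ‖a‖ ≤ ‖J a b‖ := by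
  have := J_norm_sq a b
  exact (sq_le_sq₀ (norm_nonneg _) (norm_nonneg _)).1 (by nlinarith [sq_nonneg ‖b‖])

/-- Consequences of the abstract relation between `M - μ` and `S` via `K`. -/
lemma core [CompleteSpace H1] [CompleteSpace H2]
    (M : PMap (WithLp 2 (H1 × H2)) (WithLp 2 (H1 × H2))) (hM : M.IsSelfAdjoint)
    (S : PMap H1 H1) (μ : ℝ) (K : H1 → H2) (hS : S.IsSelfAdjoint)
    (h1 : ∀ w ∈ S.dom, J w (K w) ∈ M.dom ∧
      M.toFun (J w (K w)) - (μ : ℂ) • J w (K w) = J (S.toFun w) 0)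
    (h2 : ∀ x y h, J x y ∈ M.dom → M.toFun (J x y) - (μ : ℂ) • J x y = J h 0 → y = K x)
    (P : Set H2) (hP : Dense P)
    (h3 : ∀ z ∈ P, ∃ b : H1, ∀ w ∈ S.dom, (⟪z, K w⟫ : ℂ) = ⟪b, w⟫)
    (hess : μ ∉ M.specEssR) :
    ((0 : ℝ) ∈ S.specR ↔ μ ∈ M.specR) ∧ (0 : ℝ) ∉ S.specEssR ∧
      Module.finrank ℂ (S.eigSp 0) = Module.finrank ℂ (M.eigSp μ) := by
  have h4 : ∀ x y h, J x y ∈ M.dom → M.toFun (J x y) - (μ : ℂ) • J x y = J h 0 →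
      x ∈ S.dom ∧ S.toFun x = h := by
    intro x y h hxy he
    have := (hS.2 x h).1 (by
      intro w hw
      have hs := symm_shift hM μ (h1 w hw).1 hxy
      rw [he, (h1 w hw).2, J_inner, J_inner, inner_zero_left, inner_zero_right] at hs
      simpa using hs)
    exact ⟨this.1, this.2.symm⟩
  have hmemS : ∀ x, x ∈ S.eigSp 0 ↔ x ∈ S.dom ∧ S.toFun x = 0 := by
    intro x
    change (x ∈ S.dom ∧ S.toFun x = ((0 : ℝ) : ℂ) • x) ↔ _
    simp
  have hmemM : ∀ p, p ∈ M.eigSp μ ↔ p ∈ M.dom ∧ M.toFun p - (μ : ℂ) • p = J 0 0 := by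
    intro p
    change (p ∈ M.dom ∧ M.toFun p = (μ : ℂ) • p) ↔ _
    rw [J_zero, sub_eq_zero]
  have hfwd : ∀ x y, J x y ∈ M.eigSp μ → x ∈ S.eigSp 0 ∧ y = K x := by
    intro x y h
    rw [hmemM] at h
    exact ⟨(hmemS x).2 (h4 x y 0 h.1 h.2), h2 x y 0 h.1 h.2⟩
  have hbwd : ∀ x, x ∈ S.eigSp 0 → J x (K x) ∈ M.eigSp μ := by
    intro x hx
    rw [hmemS] at hx
    rw [hmemM]
    have := h1 x hx.1
    rw [hx.2] at this
    exact this
  refine ⟨?_, ?_, ?_⟩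
  · change ¬ (((0 : ℝ) : ℂ) ∈ S.resolventSet) ↔ ¬ ((μ : ℂ) ∈ M.resolventSet)
    rw [not_iff_not]
    constructor
    · rintro ⟨R, hR1, -⟩
      apply resolvent_of_not_ess hM μ hess
      rw [Submodule.eq_bot_iff]
      intro p hp
      obtain ⟨x, y, rfl⟩ := J_surj p
      obtain ⟨hx, hy⟩ := hfwd x y hp
      have hx' := (hmemS x).1 hx
      have e := hR1 x hx'.1
      rw [hx'.2] at e
      have hx0 : x = 0 := by simpa using e.symm
      subst hx0
      have h0 := h2 0 0 0 M.dom.zero_mem (by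
        have := M.map_smul' 0 0 M.dom.zero_mem
        rw [zero_smul, zero_smul] at this
        rw [J_zero, this]; simp)
      rw [hy, ← h0, J_zero]
    · rintro ⟨R, hR1, hR2⟩
      let i : H1 →ₗ[ℂ] WithLp 2 (H1 × H2) :=
        { toFun := fun x => J x 0
          map_add' := fun x y => by rw [J_add, add_zero]
          map_smul' := fun c x => by rw [RingHom.id_apply, J_smul, smul_zero] }
      let q : WithLp 2 (H1 × H2) →ₗ[ℂ] H1 :=
        { toFun := fun p => p.fst
          map_add' := fun x y => rfl
          map_smul' := fun c x => rfl }
      have hq : ∀ a b, q (J a b) = a := fun _ _ => rfl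
      let R' : H1 →L[ℂ] H1 := LinearMap.mkContinuous (q ∘ₗ R.toLinearMap ∘ₗ i) ‖R‖ (by
        intro x
        have e1 : ‖q (R (J x 0))‖ ≤ ‖R (J x 0)‖ := J_norm_ge _ _
        have e2 := R.le_opNorm (J x 0)
        rw [J_norm_zero] at e2
        exact e1.trans e2)
      have hR' : ∀ x, R' x = q (R (J x 0)) := fun _ => rfl
      refine ⟨R', ?_, ?_⟩
      · intro x hx
        have e := hR1 _ (h1 x hx).1
        rw [(h1 x hx).2] at e
        rw [hR', Complex.ofReal_zero, zero_smul, sub_zero, e, hq]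
      · intro h
        obtain ⟨a, b, hab⟩ := J_surj (R (J h 0))
        have e := hR2 (J h 0)
        rw [hab] at e
        have := h4 a b h e.1 e.2
        rw [hR', hab, hq]
        exact ⟨this.1, by rw [this.2]; simp⟩
  · rintro ⟨f, hf1, hf2, hf3, hf4⟩
    apply hess
    have hge : ∀ n, 1 ≤ ‖J (f n) (K (f n))‖ := fun n => by
      rw [← hf2 n]; exact J_norm_ge _ _
    set N : ℕ → ℝ := fun n => ‖J (f n) (K (f n))‖ with hN
    have hpos : ∀ n, 0 < N n := fun n => lt_of_lt_of_le one_pos (hge n)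
    have hinv : ∀ n, ‖(((N n)⁻¹ : ℝ) : ℂ)‖ ≤ 1 := by
      intro n
      rw [Complex.norm_real, norm_inv, Real.norm_of_nonneg (hpos n).le]
      exact inv_le_one_of_one_le₀ (hge n)
    have hunit : ∀ n, ‖(((N n)⁻¹ : ℝ) : ℂ) • J (f n) (K (f n))‖ = 1 := by
      intro n
      rw [norm_smul, Complex.norm_real, norm_inv, Real.norm_of_nonneg (hpos n).le]
      exact inv_mul_cancel₀ (hpos n).ne'
    refine ⟨fun n => (((N n)⁻¹ : ℝ) : ℂ) • J (f n) (K (f n)),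
      fun n => M.dom.smul_mem _ (h1 _ (hf1 n)).1, hunit, ?_, ?_⟩
    · have hlim : ∀ (g : ℕ → ℂ), Tendsto g atTop (𝓝 0) →
          Tendsto (fun n => (((N n)⁻¹ : ℝ) : ℂ) * g n) atTop (𝓝 0) := by
        intro g hg
        refine squeeze_zero_norm (fun n => ?_) (tendsto_zero_iff_norm_tendsto_zero.1 hg)
        rw [norm_mul]
        exact mul_le_of_le_one_left (norm_nonneg _) (hinv n)
      refine weakNull_of_dense _ 1 (fun n => (hunit n).le)
        {p | p.snd ∈ P} ?_ ?_
      · rw [Metric.dense_iff]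
        intro p r hr
        obtain ⟨a, b, rfl⟩ := J_surj p
        obtain ⟨z, hz, hzP⟩ := Metric.dense_iff.1 hP b r hr
        refine ⟨J a z, ?_, hzP⟩
        rw [Metric.mem_ball, dist_eq_norm] at hz ⊢
        rw [J_sub, sub_self]
        have := J_norm_sq (0 : H1) (z - b)
        rw [norm_zero] at this
        have e : ‖J (0 : H1) (z - b)‖ = ‖z - b‖ :=
          (sq_eq_sq₀ (norm_nonneg _) (norm_nonneg _)).1 (by linarith)
        rwa [e]
      · intro p hp
        obtain ⟨a, z, rfl⟩ := J_surj p
        obtain ⟨b, hb⟩ := h3 z hp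
        have := hlim _ ((hf3 a).add (hf3 b) |>.trans (by rw [add_zero]))
        refine this.congr (fun n => ?_)
        rw [inner_smul_right, J_inner, hb _ (hf1 n)]
    · refine squeeze_zero (fun _ => norm_nonneg _) (fun n => ?_) hf4
      rw [M.map_smul' _ _ (h1 _ (hf1 n)).1, smul_comm, ← smul_sub, (h1 _ (hf1 n)).2, norm_smul,
        J_norm_zero, Complex.ofReal_zero, zero_smul, sub_zero]
      exact mul_le_of_le_one_left (norm_nonneg _) (hinv n)
  · symm
    let φ : M.eigSp μ →ₗ[ℂ] S.eigSp 0 :=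
      { toFun := fun p => ⟨p.1.fst, (hfwd p.1.fst p.1.snd p.2).1⟩
        map_add' := fun x y => rfl
        map_smul' := fun c x => rfl }
    refine LinearEquiv.finrank_eq (LinearEquiv.ofBijective φ ⟨?_, ?_⟩)
    · rintro ⟨p, hp⟩ ⟨p', hp'⟩ h
      obtain ⟨x, y, rfl⟩ := J_surj p
      obtain ⟨x', y', rfl⟩ := J_surj p'
      have hxx : x = x' := congrArg Subtype.val h
      subst hxx
      have e1 := (hfwd _ _ hp).2
      have e2 := (hfwd _ _ hp').2
      subst e1
      subst e2
      rfl
    · rintro ⟨x, hx⟩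
      exact ⟨⟨J x (K x), hbwd x hx⟩, rfl⟩

end pair
end SchurAux

/-- Lemma 4.1 of the paper.  For a top-dominant block operator matrix
`M₀ = [[A,B],[B*,D]]` with self-adjoint closure `M`, `d = max Spec D`,
`λ_e = inf (Spec_ess M ∩ (d,∞))` and Schur complement `S(μ)`:
the spectra of `S` and `M` coincide on `(d, λ_e)`; one has
`Spec_ess(S) ∩ (d, λ_e) = ∅`, i.e. `0 ∉ Spec_ess (S μ)` for each `μ ∈ (d, λ_e)`; and for
every eigenvalue `μ` of `M` in `(d, λ_e)`, `dim ker (S μ) = dim ker (M − μ)`. -/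
theorem statement7
    {H1 : Type*} [NormedAddCommGroup H1] [InnerProductSpace ℂ H1] [CompleteSpace H1]
    {H2 : Type*} [NormedAddCommGroup H2] [InnerProductSpace ℂ H2] [CompleteSpace H2]
    -- (i) `A` and `D` are self-adjoint on `H1` and `H2` respectively
    (A : PMap H1 H1) (hA : A.IsSelfAdjoint)
    (D : PMap H2 H2) (hD : D.IsSelfAdjoint)
    -- (ii) `A` bounded below, `D` bounded above with `d = max Spec D`,
    -- `B` closed and densely defined from `H2` to `H1`
    (hAbelow : ∃ c : ℝ, ∀ x ∈ A.dom, c * ‖x‖ ^ 2 ≤ (⟪A.toFun x, x⟫ : ℂ).re)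
    (d : ℝ) (hd : IsGreatest D.specR d)
    (hDabove : ∀ y ∈ D.dom, (⟪D.toFun y, y⟫ : ℂ).re ≤ d * ‖y‖ ^ 2)
    (B : PMap H2 H1)
    (hBclosed : IsClosed {p : H2 × H1 | p.1 ∈ B.dom ∧ p.2 = B.toFun p.1})
    (hBdense : Dense (B.dom : Set H2))
    -- `Bs` is the adjoint `B*` of `B`
    (Bs : PMap H1 H2)
    (hBs : (∀ y : H1, y ∈ Bs.dom ↔ ∃ z : H2, ∀ x ∈ B.dom, ⟪B.toFun x, y⟫ = ⟪x, z⟫) ∧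
      ∀ x ∈ B.dom, ∀ y ∈ Bs.dom, ⟪B.toFun x, y⟫ = ⟪x, Bs.toFun y⟫)
    -- `Fa = Dom(|A|^{1/2}) = Dom(𝔞)`, the domain of the closed form `fa = 𝔞` of `A`
    (Fa : Submodule ℂ H1) (fa : H1 → H1 → ℂ)
    (hAdomFa : (A.dom : Set H1) ⊆ Fa)
    (hfaHerm : ∀ x ∈ Fa, ∀ y ∈ Fa, fa x y = starRingEnd ℂ (fa y x))
    (hfaA : ∀ x ∈ A.dom, ∀ y ∈ Fa, fa x y = ⟪A.toFun x, y⟫)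
    -- (iii) `Dom(|A|^{1/2}) ⊆ Dom(B*)`, `Dom(B) ⊆ Dom(D)`, and `Dom(B)` is a core for `D`
    (hFaBs : (Fa : Set H1) ⊆ (Bs.dom : Set H1))
    (hBD : B.dom ≤ D.dom)
    (hBcore : ∀ y ∈ D.dom, ∀ δ : ℝ, 0 < δ →
      ∃ z ∈ B.dom, ‖z - y‖ < δ ∧ ‖D.toFun z - D.toFun y‖ < δ)
    -- `ν < min Spec A`, with `RA = (A − ν)⁻¹` and `G = cl((A − ν)⁻¹ B)` bounded,
    -- and `RD z = (D − z)⁻¹` for `Re z > d`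
    (ν : ℝ) (hν : ∃ c : ℝ, ν < c ∧ ∀ x ∈ A.dom, c * ‖x‖ ^ 2 ≤ (⟪A.toFun x, x⟫ : ℂ).re)
    (RA : H1 →L[ℂ] H1)
    (hRA : (∀ x ∈ A.dom, RA (A.toFun x - (ν : ℂ) • x) = x) ∧
      ∀ y : H1, RA y ∈ A.dom ∧ A.toFun (RA y) - (ν : ℂ) • RA y = y)
    (G : H2 →L[ℂ] H1) (hG : ∀ y ∈ B.dom, G y = RA (B.toFun y))
    (RD : ℂ → (H2 →L[ℂ] H2))
    (hRD : ∀ z : ℂ, d < z.re →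
      (∀ y ∈ D.dom, RD z (D.toFun y - z • y) = y) ∧
      ∀ w : H2, RD z w ∈ D.dom ∧ D.toFun (RD z w) - z • RD z w = w)
    -- `M` is the self-adjoint closure of `M₀`
    (M : PMap (WithLp 2 (H1 × H2)) (WithLp 2 (H1 × H2))) (hM : M.IsSelfAdjoint)
    (hMdom : ∀ (x : H1) (y : H2),
      (WithLp.equiv 2 (H1 × H2)).symm (x, y) ∈ M.dom ↔ y ∈ D.dom ∧ x + G y ∈ A.dom)
    (hMact : ∀ (x : H1) (y : H2),
      (WithLp.equiv 2 (H1 × H2)).symm (x, y) ∈ M.dom → x ∈ Bs.dom →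
      M.toFun ((WithLp.equiv 2 (H1 × H2)).symm (x, y)) =
        (WithLp.equiv 2 (H1 × H2)).symm
          (A.toFun (x + G y) - (ν : ℂ) • G y, Bs.toFun x + D.toFun y))
    -- the Schur complement `S μ` for real `μ > d`
    (S : ℝ → PMap H1 H1)
    (hSsa : ∀ μ : ℝ, d < μ → (S μ).IsSelfAdjoint)
    (hSdom : ∀ μ : ℝ, d < μ → ∀ x : H1,
      x ∈ (S μ).dom ↔ x ∈ Fa ∧ x - G (RD (μ : ℂ) (Bs.toFun x)) ∈ A.dom)
    (hSact : ∀ μ : ℝ, d < μ → ∀ x ∈ (S μ).dom,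
      (S μ).toFun x = A.toFun (x - G (RD (μ : ℂ) (Bs.toFun x)))
        - (ν : ℂ) • (x - G (RD (μ : ℂ) (Bs.toFun x))) + ((ν : ℂ) - (μ : ℂ)) • x)
    -- `lamE`: the interval `(d, lamE)` lies below the essential spectrum of `M`
    -- (`lamE = inf (Spec_ess M ∩ (d, ∞))`)
    (lamE : ℝ) (hlamE : ∀ t ∈ M.specEssR, d < t → lamE ≤ t)
    :
    (∀ μ : ℝ, μ ∈ Set.Ioo d lamE → ((0 : ℝ) ∈ (S μ).specR ↔ μ ∈ M.specR)) ∧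
    (∀ μ : ℝ, μ ∈ Set.Ioo d lamE → (0 : ℝ) ∉ (S μ).specEssR) ∧
    (∀ μ : ℝ, μ ∈ Set.Ioo d lamE → M.eigSp μ ≠ ⊥ →
      Module.finrank ℂ ((S μ).eigSp 0) = Module.finrank ℂ (M.eigSp μ)) := by
  
  have key : ∀ μ : ℝ, μ ∈ Set.Ioo d lamE →
      ((0 : ℝ) ∈ (S μ).specR ↔ μ ∈ M.specR) ∧ (0 : ℝ) ∉ (S μ).specEssR ∧
      Module.finrank ℂ ((S μ).eigSp 0) = Module.finrank ℂ (M.eigSp μ) := by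
    rintro μ ⟨hμ, hμe⟩
    have hR := hRD (μ : ℂ) (by simpa using hμ)
    have hMdom' : ∀ (x : H1) (y : H2), SchurAux.J x y ∈ M.dom ↔ y ∈ D.dom ∧ x + G y ∈ A.dom :=
      hMdom
    have hMact' : ∀ (x : H1) (y : H2), SchurAux.J x y ∈ M.dom → x ∈ Bs.dom →
        M.toFun (SchurAux.J x y) =
          SchurAux.J (A.toFun (x + G y) - (ν : ℂ) • G y) (Bs.toFun x + D.toFun y) := hMact
    have hB0 : ∀ z ∈ B.dom, SchurAux.J 0 z ∈ M.dom ∧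
        M.toFun (SchurAux.J 0 z) = SchurAux.J (B.toFun z) (D.toFun z) := by
      intro z hz
      have hGz := hRA.2 (B.toFun z)
      rw [← hG z hz] at hGz
      have hm : SchurAux.J 0 z ∈ M.dom := (hMdom' 0 z).2 ⟨hBD hz, by rw [zero_add]; exact hGz.1⟩
      refine ⟨hm, ?_⟩
      have hb0 : Bs.toFun 0 = 0 := by
        have := Bs.map_smul' 0 0 Bs.dom.zero_mem
        simpa using this
      rw [hMact' 0 z hm Bs.dom.zero_mem, zero_add, hGz.2, hb0, zero_add]
    have hxBs : ∀ x y, SchurAux.J x y ∈ M.dom → x ∈ Bs.dom := by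
      intro x y hxy
      rw [hBs.1]
      obtain ⟨u, v, huv⟩ := SchurAux.J_surj (M.toFun (SchurAux.J x y))
      refine ⟨v - D.toFun y, fun z hz => ?_⟩
      have hs := SchurAux.symm_of hM (hB0 z hz).1 hxy
      rw [(hB0 z hz).2, huv, SchurAux.J_inner, SchurAux.J_inner, inner_zero_left, zero_add,
        SchurAux.symm_of hD (hBD hz) ((hMdom' x y).1 hxy).1] at hs
      rw [inner_sub_right, ← hs]; ring
    have hDneg : ∀ y ∈ D.dom, D.toFun (-y) = - D.toFun y := by
      intro y hy
      have := D.map_smul' (-1) y hy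
      simpa using this
    refine SchurAux.core M hM (S μ) μ (fun x => - RD (μ : ℂ) (Bs.toFun x)) (hSsa μ hμ) ?_ ?_
      ((fun b => D.toFun b - (μ : ℂ) • b) '' (B.dom : Set H2)) ?_ ?_
      (fun h => absurd (hlamE μ h hμ) (not_le.2 hμe))
    · intro w hw
      obtain ⟨hwF, hwA⟩ := (hSdom μ hμ w).1 hw
      have hr := hR.2 (Bs.toFun w)
      have hm : SchurAux.J w (- RD (μ : ℂ) (Bs.toFun w)) ∈ M.dom := by
        rw [hMdom']
        refine ⟨D.dom.neg_mem hr.1, ?_⟩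
        rw [map_neg, ← sub_eq_add_neg]; exact hwA
      refine ⟨hm, ?_⟩
      rw [hMact' _ _ hm (hFaBs hwF), SchurAux.J_smul, SchurAux.J_sub, hSact μ hμ w hw, map_neg,
        ← sub_eq_add_neg, hDneg _ hr.1]
      congr 1
      · module
      · nth_rewrite 1 [← hr.2]
        module
    · intro x y h hxy he
      have hx := hxBs x y hxy
      have hy := ((hMdom' x y).1 hxy).1
      rw [hMact' _ _ hxy hx, SchurAux.J_smul, SchurAux.J_sub] at he
      have e := (SchurAux.J_inj he).2
      have e1 := hR.1 y hy
      have e2 : D.toFun y - (μ : ℂ) • y = - Bs.toFun x := by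
        rw [← sub_eq_zero, ← e]; abel
      rw [e2, map_neg] at e1
      exact e1.symm
    · rw [Metric.dense_iff]
      intro w r hr
      have hw := hR.2 w
      have hpos : 0 < r / (1 + |μ|) := by positivity
      obtain ⟨z, hz, hz1, hz2⟩ := hBcore _ hw.1 _ hpos
      refine ⟨D.toFun z - (μ : ℂ) • z, ?_, ⟨z, hz, rfl⟩⟩
      rw [Metric.mem_ball, dist_eq_norm]
      set y := RD (μ : ℂ) w with hydef
      rw [← hw.2]
      have e : D.toFun z - (μ : ℂ) • z - (D.toFun y - (μ : ℂ) • y)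
          = (D.toFun z - D.toFun y) - (μ : ℂ) • (z - y) := by module
      rw [e]
      calc _ ≤ _ := norm_sub_le _ _
        _ = ‖D.toFun z - D.toFun y‖ + |μ| * ‖z - y‖ := by
          rw [norm_smul, Complex.norm_real, Real.norm_eq_abs]
        _ < r / (1 + |μ|) + |μ| * (r / (1 + |μ|)) :=
          add_lt_add_of_lt_of_le hz2 (mul_le_mul_of_nonneg_left hz1.le (abs_nonneg _))
        _ = r := by field_simp
    · rintro _ ⟨b, hb, rfl⟩
      refine ⟨- B.toFun b, fun w hw => ?_⟩
      have hr := hR.2 (Bs.toFun w)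
      have hwB := hFaBs ((hSdom μ hμ w).1 hw).1
      have e := SchurAux.symm_shift hD μ (hBD hb) hr.1
      rw [hr.2] at e
      simp only [inner_neg_right, inner_neg_left]
      rw [e, hBs.2 b hb w hwB]
  exact ⟨fun μ h => (key μ h).1, fun μ h => (key μ h).2.1, fun μ h _ => (key μ h).2.2⟩
end

section
/- Let M₀ = [[A,B],[B*,D]] be a top-dominant block operator matrix satisfying conditions (i)–(iii), with self-adjoint closure M, d = max Spec(D), and Schur complement S(μ). Let λ > d be real and x ∈ Dom(S(λ)). Then the vector y = (x, −(D−λ)^{-1}B*x) belongs to Dom(M), ‖y‖ ≥ ‖x‖, and (M−λ)y = (S(λ)x, 0). -/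
open Filter Topology
open scoped ComplexInnerProductSpace

/-- from the proof of Lemma 4.1.  For a top-dominant block operator
matrix `M₀ = [[A,B],[B*,D]]` with self-adjoint closure `M`, `d = max Spec D` and Schur
complement `S(μ)`: if `lam > d` and `x ∈ Dom (S lam)`, then the vector
`y = (x, −(D − lam)⁻¹ B* x)` belongs to `Dom M`, `‖y‖ ≥ ‖x‖`, and
`(M − lam) y = (S(lam) x, 0)`. -/
theorem statement8
    {H1 : Type*} [NormedAddCommGroup H1] [InnerProductSpace ℂ H1] [CompleteSpace H1]
    {H2 : Type*} [NormedAddCommGroup H2] [InnerProductSpace ℂ H2] [CompleteSpace H2]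
    -- (i) `A` and `D` are self-adjoint on `H1` and `H2` respectively
    (A : PMap H1 H1) (hA : A.IsSelfAdjoint)
    (D : PMap H2 H2) (hD : D.IsSelfAdjoint)
    -- (ii) `A` bounded below, `D` bounded above with `d = max Spec D`,
    -- `B` closed and densely defined from `H2` to `H1`
    (hAbelow : ∃ c : ℝ, ∀ x ∈ A.dom, c * ‖x‖ ^ 2 ≤ (⟪A.toFun x, x⟫ : ℂ).re)
    (d : ℝ) (hd : IsGreatest D.specR d)
    (hDabove : ∀ y ∈ D.dom, (⟪D.toFun y, y⟫ : ℂ).re ≤ d * ‖y‖ ^ 2)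
    (B : PMap H2 H1)
    (hBclosed : IsClosed {p : H2 × H1 | p.1 ∈ B.dom ∧ p.2 = B.toFun p.1})
    (hBdense : Dense (B.dom : Set H2))
    -- `Bs` is the adjoint `B*` of `B`
    (Bs : PMap H1 H2)
    (hBs : (∀ y : H1, y ∈ Bs.dom ↔ ∃ z : H2, ∀ x ∈ B.dom, ⟪B.toFun x, y⟫ = ⟪x, z⟫) ∧
      ∀ x ∈ B.dom, ∀ y ∈ Bs.dom, ⟪B.toFun x, y⟫ = ⟪x, Bs.toFun y⟫)
    -- `Fa = Dom(|A|^{1/2}) = Dom(𝔞)`, the domain of the closed form `fa = 𝔞` of `A`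
    (Fa : Submodule ℂ H1) (fa : H1 → H1 → ℂ)
    (hAdomFa : (A.dom : Set H1) ⊆ Fa)
    (hfaHerm : ∀ x ∈ Fa, ∀ y ∈ Fa, fa x y = starRingEnd ℂ (fa y x))
    (hfaA : ∀ x ∈ A.dom, ∀ y ∈ Fa, fa x y = ⟪A.toFun x, y⟫)
    -- (iii) `Dom(|A|^{1/2}) ⊆ Dom(B*)`, `Dom(B) ⊆ Dom(D)`, and `Dom(B)` is a core for `D`
    (hFaBs : (Fa : Set H1) ⊆ (Bs.dom : Set H1))
    (hBD : B.dom ≤ D.dom)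
    (hBcore : ∀ y ∈ D.dom, ∀ δ : ℝ, 0 < δ →
      ∃ z ∈ B.dom, ‖z - y‖ < δ ∧ ‖D.toFun z - D.toFun y‖ < δ)
    -- `ν < min Spec A`, with `RA = (A − ν)⁻¹` and `G = cl((A − ν)⁻¹ B)` bounded,
    -- and `RD z = (D − z)⁻¹` for `Re z > d`
    (ν : ℝ) (hν : ∃ c : ℝ, ν < c ∧ ∀ x ∈ A.dom, c * ‖x‖ ^ 2 ≤ (⟪A.toFun x, x⟫ : ℂ).re)
    (RA : H1 →L[ℂ] H1)
    (hRA : (∀ x ∈ A.dom, RA (A.toFun x - (ν : ℂ) • x) = x) ∧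
      ∀ y : H1, RA y ∈ A.dom ∧ A.toFun (RA y) - (ν : ℂ) • RA y = y)
    (G : H2 →L[ℂ] H1) (hG : ∀ y ∈ B.dom, G y = RA (B.toFun y))
    (RD : ℂ → (H2 →L[ℂ] H2))
    (hRD : ∀ z : ℂ, d < z.re →
      (∀ y ∈ D.dom, RD z (D.toFun y - z • y) = y) ∧
      ∀ w : H2, RD z w ∈ D.dom ∧ D.toFun (RD z w) - z • RD z w = w)
    -- `M` is the self-adjoint closure of `M₀`
    (M : PMap (WithLp 2 (H1 × H2)) (WithLp 2 (H1 × H2))) (hM : M.IsSelfAdjoint)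
    (hMdom : ∀ (x : H1) (y : H2),
      (WithLp.equiv 2 (H1 × H2)).symm (x, y) ∈ M.dom ↔ y ∈ D.dom ∧ x + G y ∈ A.dom)
    (hMact : ∀ (x : H1) (y : H2),
      (WithLp.equiv 2 (H1 × H2)).symm (x, y) ∈ M.dom → x ∈ Bs.dom →
      M.toFun ((WithLp.equiv 2 (H1 × H2)).symm (x, y)) =
        (WithLp.equiv 2 (H1 × H2)).symm
          (A.toFun (x + G y) - (ν : ℂ) • G y, Bs.toFun x + D.toFun y))
    -- the Schur complement `S μ` for real `μ > d`
    (S : ℝ → PMap H1 H1)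
    (hSsa : ∀ μ : ℝ, d < μ → (S μ).IsSelfAdjoint)
    (hSdom : ∀ μ : ℝ, d < μ → ∀ x : H1,
      x ∈ (S μ).dom ↔ x ∈ Fa ∧ x - G (RD (μ : ℂ) (Bs.toFun x)) ∈ A.dom)
    (hSact : ∀ μ : ℝ, d < μ → ∀ x ∈ (S μ).dom,
      (S μ).toFun x = A.toFun (x - G (RD (μ : ℂ) (Bs.toFun x)))
        - (ν : ℂ) • (x - G (RD (μ : ℂ) (Bs.toFun x))) + ((ν : ℂ) - (μ : ℂ)) • x)
    (lam : ℝ) (hlam : d < lam)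
    (x : H1) (hx : x ∈ (S lam).dom) :
    (WithLp.equiv 2 (H1 × H2)).symm (x, -(RD (lam : ℂ) (Bs.toFun x))) ∈ M.dom ∧
    ‖x‖ ≤ ‖(WithLp.equiv 2 (H1 × H2)).symm (x, -(RD (lam : ℂ) (Bs.toFun x)))‖ ∧
    M.toFun ((WithLp.equiv 2 (H1 × H2)).symm (x, -(RD (lam : ℂ) (Bs.toFun x))))
        - (lam : ℂ) • (WithLp.equiv 2 (H1 × H2)).symm (x, -(RD (lam : ℂ) (Bs.toFun x)))
      = (WithLp.equiv 2 (H1 × H2)).symm ((S lam).toFun x, 0) := by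
  obtain ⟨hxF, hxA⟩ := (hSdom lam hlam x).1 hx
  have hact := hSact lam hlam x hx
  obtain ⟨hrD, hr⟩ := (hRD (lam : ℂ) (by simpa using hlam)).2 (Bs.toFun x)
  generalize RD (lam : ℂ) (Bs.toFun x) = r at *
  have hneg : D.toFun (-r) = -D.toFun r := by
    have h := D.map_smul' (-1) r hrD
    simpa using h
  have hsub : x + G (-r) = x - G r := by rw [map_neg, sub_eq_add_neg]
  have hmem : (WithLp.equiv 2 (H1 × H2)).symm (x, -r) ∈ M.dom :=
    (hMdom x (-r)).2 ⟨D.dom.neg_mem hrD, by rw [hsub]; exact hxA⟩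
  refine ⟨hmem, ?_, ?_⟩
  · exact WithLp.norm_fst_le H1 ((WithLp.equiv 2 (H1 × H2)).symm (x, -r))
  · rw [hMact x (-r) hmem (hFaBs hxF), hsub, hneg, hact, map_neg]
    apply (WithLp.equiv 2 (H1 × H2)).injective
    refine Prod.ext ?_ ?_
    · change A.toFun (x - G r) - (ν : ℂ) • -G r - (lam : ℂ) • x = _
      change _ = A.toFun (x - G r) - (ν : ℂ) • (x - G r) + ((ν : ℂ) - (lam : ℂ)) • x
      module
    · change Bs.toFun x + -D.toFun r - (lam : ℂ) • -r = 0
      rw [← hr]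
      module
end
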